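/- arXiv:2001.11308 — 8 statements merged into one kernel-verified Lean document; each statement's English description precedes it below -/
import Mathlib

section
/- Let D be the domain of a switching problem with controlled randomisation. For every x ∈ D: (1) the outward normal cone satisfies C(x) ⊆ {v ∈ ℝ^d : ∑_{i=1}^d v_i = 0}; (2) C(x) = C(y^x), where y^x := x − x_d·(1,…,1) ∈ D_∘ is the projection of x onto the slice D_∘ along the direction (1,…,1). -/
open Matrix

/-- Let `D` be the domain of a switching problem with controlled
randomisation.  For every `x ∈ D`:
(1) the outward normal cone `C(x) = {v : vᵀ(z − x) ≤ 0 ∀ z ∈ D}` satisfies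
`C(x) ⊆ {v : ∑ i, v i = 0}`;
(2) `C(x) = C(y^x)` where `y^x := x − x_d·(1,…,1)` is the projection of `x` onto
the slice `D_∘ = D ∩ {y_d = 0}` along the direction `(1,…,1)` (and `y^x ∈ D_∘`). -/
theorem normal_cone_sum_zero_and_translation
    (n : ℕ) (𝒞 : Type*)
    (P : 𝒞 → Matrix (Fin (n + 2)) (Fin (n + 2)) ℝ)
    (c : 𝒞 → Fin (n + 2) → ℝ)
    (hP0 : ∀ u i j, 0 ≤ P u i j)
    (hP1 : ∀ u i, ∑ j, P u i j = 1)
    (D : Set (Fin (n + 2) → ℝ))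
    (hD : D = {y | ∀ i, ∀ u : 𝒞, (∑ j, P u i j * y j) - c u i ≤ y i}) :
    ∀ x ∈ D,
      (∀ v : Fin (n + 2) → ℝ,
        (∀ z ∈ D, (∑ i, v i * (z i - x i)) ≤ 0) → ∑ i, v i = 0) ∧
      ((fun i => x i - x (Fin.last (n + 1))) ∈ D ∧
        (fun i => x i - x (Fin.last (n + 1))) (Fin.last (n + 1)) = 0) ∧
      {v : Fin (n + 2) → ℝ | ∀ z ∈ D, (∑ i, v i * (z i - x i)) ≤ 0} =
        {v : Fin (n + 2) → ℝ |
          ∀ z ∈ D, (∑ i, v i * (z i - (x i - x (Fin.last (n + 1))))) ≤ 0} := by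
  have tr : ∀ y ∈ D, ∀ a : ℝ, (fun i => y i + a) ∈ D := by
    intro y hy a
    rw [hD] at hy ⊢
    intro i u
    have h := hy i u
    have e : ∑ j, P u i j * (y j + a) = (∑ j, P u i j * y j) + a := by
      simp only [mul_add, Finset.sum_add_distrib]
      rw [← Finset.sum_mul, hP1, one_mul]
    show (∑ j, P u i j * (y j + a)) - c u i ≤ y i + a
    rw [e]
    linarith
  intro x hx
  refine ⟨?_, ⟨?_, ?_⟩, ?_⟩
  · intro v hv
    have h1 := hv _ (tr x hx 1)
    have h2 := hv _ (tr x hx (-1))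
    simp only [add_sub_cancel_left, mul_one, mul_neg, Finset.sum_neg_distrib] at h1 h2
    linarith
  · simpa only [sub_eq_add_neg] using tr x hx (-x (Fin.last (n + 1)))
  · simp
  · ext v
    simp only [Set.mem_setOf_eq]
    constructor
    · intro h z hz
      refine le_trans (le_of_eq ?_) (h _ (tr z hz (x (Fin.last (n + 1)))))
      exact Finset.sum_congr rfl fun i _ => by ring
    · intro h z hz
      refine le_trans (le_of_eq ?_) (h _ (tr z hz (-x (Fin.last (n + 1)))))
      exact Finset.sum_congr rfl fun i _ => by ring
end

section
/- In the uncontrolled setting with an irreducible stochastic matrix P: for every x ∈ D and all indices 1 ≤ i, j ≤ d, one has −C_{i,j} ≤ x_i − x_j ≤ C_{j,i}. -/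
open Matrix

theorem aux_min {n : ℕ} (P : Matrix (Fin (n + 2)) (Fin (n + 2)) ℝ)
    (hP0 : ∀ i j, 0 ≤ P i j) (hP1 : ∀ i, ∑ j, P i j = 1)
    (hirr : ∀ i j, ∃ k : ℕ, 1 ≤ k ∧ 0 < (P ^ k) i j)
    (j : Fin (n + 2)) (z : Fin (n + 2) → ℝ) (hj : z j = 0)
    (hz : ∀ i, i ≠ j → ∑ b, P i b * z b ≤ z i) : ∀ i, 0 ≤ z i := by
  obtain ⟨m, hm⟩ := Finite.exists_min z
  by_contra hcon
  push Not at hcon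
  obtain ⟨i, hi⟩ := hcon
  have hneg : z m < 0 := lt_of_le_of_lt (hm i) hi
  have hpow : ∀ (k : ℕ) (a b), 0 ≤ (P ^ k) a b := by
    intro k
    induction k with
    | zero =>
      intro a b
      rw [pow_zero, Matrix.one_apply]
      split_ifs <;> norm_num
    | succ k ih =>
      intro a b
      rw [pow_succ, Matrix.mul_apply]
      exact Finset.sum_nonneg fun c _ => mul_nonneg (ih a c) (hP0 c b)
  have key : ∀ (k : ℕ) (l), 0 < (P ^ k) m l → z l = z m := by
    intro k
    induction k with
    | zero =>
      intro l hl
      rw [pow_zero, Matrix.one_apply] at hl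
      split_ifs at hl with h
      · rw [h]
      · exact absurd hl (lt_irrefl _)
    | succ k ih =>
      intro l hl
      rw [pow_succ, Matrix.mul_apply] at hl
      obtain ⟨a, -, ha⟩ := Finset.exists_lt_of_sum_lt (s := Finset.univ)
        (f := fun _ : Fin (n + 2) => (0 : ℝ)) (by simpa using hl)
      have h1 : 0 < (P ^ k) m a :=
        lt_of_le_of_ne (hpow k m a) fun h => by simp [← h] at ha
      have h2 : 0 < P a l :=
        lt_of_le_of_ne (hP0 a l) fun h => by simp [← h] at ha
      have hza := ih a h1
      have haj : a ≠ j := by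
        rintro rfl
        linarith
      have hs : ∑ b, P a b * (z b - z m) ≤ 0 := by
        simp only [mul_sub, Finset.sum_sub_distrib, ← Finset.sum_mul, hP1]
        have := hz a haj
        linarith
      have ht := Finset.single_le_sum (f := fun b => P a b * (z b - z m))
        (fun b _ => mul_nonneg (hP0 a b) (sub_nonneg.2 (hm b))) (Finset.mem_univ l)
      have hml := hm l
      by_contra hne
      have : 0 < z l - z m := sub_pos.2 (lt_of_le_of_ne hml (Ne.symm hne))
      have := mul_pos h2 this
      linarith
  obtain ⟨k, -, hk⟩ := hirr m j
  have := key k j hk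
  linarith

theorem aux_row {n : ℕ} (P : Matrix (Fin (n + 2)) (Fin (n + 2)) ℝ)
    (j : Fin (n + 2)) (y : Fin (n + 2) → ℝ) (hj : y j = 0) (k : Fin (n + 1)) :
    ((1 - P).submatrix j.succAbove j.succAbove *ᵥ fun l => y (j.succAbove l)) k
      = y (j.succAbove k) - ∑ b, P (j.succAbove k) b * y b := by
  rw [Fin.sum_univ_succAbove _ j, hj]
  simp [Matrix.mulVec, dotProduct, sub_mul, Finset.sum_sub_distrib, Matrix.one_apply]

theorem aux_unit {n : ℕ} (P : Matrix (Fin (n + 2)) (Fin (n + 2)) ℝ)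
    (hP0 : ∀ i j, 0 ≤ P i j) (hP1 : ∀ i, ∑ j, P i j = 1)
    (hirr : ∀ i j, ∃ k : ℕ, 1 ≤ k ∧ 0 < (P ^ k) i j) (j : Fin (n + 2)) :
    IsUnit ((1 - P).submatrix j.succAbove j.succAbove).det := by
  rw [isUnit_iff_ne_zero]
  intro h0
  obtain ⟨v, hv, hMv⟩ := Matrix.exists_mulVec_eq_zero_iff.2 h0
  let y : Fin (n + 2) → ℝ := j.insertNth 0 v
  have hyj : y j = 0 := by simp [y]
  have hyv : (fun l => y (j.succAbove l)) = v := by ext l; simp [y]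
  have hrow : ∀ i, i ≠ j → ∑ b, P i b * y b = y i := by
    intro i hi
    obtain ⟨k, rfl⟩ := Fin.exists_succAbove_eq hi
    have := aux_row P j y hyj k
    rw [hyv, hMv] at this
    simp only [Pi.zero_apply] at this
    linarith
  have h1 := aux_min P hP0 hP1 hirr j y hyj fun i hi => (hrow i hi).le
  have h2 := aux_min P hP0 hP1 hirr j (fun i => - y i) (by simp [hyj]) fun i hi => by
    simp [hrow i hi]
  apply hv
  rw [← hyv]
  ext l
  have a := h1 (j.succAbove l)
  have b := h2 (j.succAbove l)
  simp only [Pi.zero_apply]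
  linarith

/-- Uncontrolled setting with an irreducible stochastic matrix `P`
(`d = n + 2`), `Q = I − P`, cost vector `c̄` and domain `D`.  The cost matrix `C` is
defined by `C j j = 0` and, for `i ≠ j` (written `i = j.succAbove k`),
`C i j = ((Q^{(j,j)})⁻¹ c̄^{(j)})_{i^{(j)}}`.  Then for every `x ∈ D` and all indices
`i, j`, one has `−C i j ≤ x i − x j ≤ C j i`. -/
theorem domain_point_differences_bounded_by_costs
    (n : ℕ)
    (P : Matrix (Fin (n + 2)) (Fin (n + 2)) ℝ)
    (c : Fin (n + 2) → ℝ)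
    (hP0 : ∀ i j, 0 ≤ P i j)
    (hP1 : ∀ i, ∑ j, P i j = 1)
    (hirr : ∀ i j, ∃ k : ℕ, 1 ≤ k ∧ 0 < (P ^ k) i j)
    (C : Fin (n + 2) → Fin (n + 2) → ℝ)
    (hCdiag : ∀ j, C j j = 0)
    (hCoff : ∀ (j : Fin (n + 2)) (k : Fin (n + 1)),
      C (j.succAbove k) j =
        (((1 - P).submatrix j.succAbove j.succAbove)⁻¹ *ᵥ fun l => c (j.succAbove l)) k)
    (D : Set (Fin (n + 2) → ℝ))
    (hD : D = {x | ∀ i, (∑ j, P i j * x j) - c i ≤ x i}) :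
    ∀ x ∈ D, ∀ i j : Fin (n + 2), -C i j ≤ x i - x j ∧ x i - x j ≤ C j i := by
  subst hD
  intro x hx
  have main : ∀ i j, 0 ≤ x i - x j + C i j := by
    intro i j
    refine aux_min P hP0 hP1 hirr j (fun i => x i - x j + C i j) (by simp [hCdiag]) ?_ i
    intro i hi
    obtain ⟨k, rfl⟩ := Fin.exists_succAbove_eq hi
    have hr := aux_row P j (fun i => C i j) (hCdiag j) k
    have hw : (fun l => C (j.succAbove l) j) =
        ((1 - P).submatrix j.succAbove j.succAbove)⁻¹ *ᵥ fun l => c (j.succAbove l) :=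
      funext fun l => hCoff j l
    rw [hw, Matrix.mulVec_mulVec,
      Matrix.mul_nonsing_inv _ (aux_unit P hP0 hP1 hirr j), Matrix.one_mulVec] at hr
    have hxi := hx (j.succAbove k)
    simp only [mul_add, mul_sub, Finset.sum_add_distrib, Finset.sum_sub_distrib,
      ← Finset.sum_mul, hP1]
    linarith
  intro i j
  have h1 := main i j
  have h2 := main j i
  constructor <;> linarith
end

section
/- In the uncontrolled setting with an irreducible stochastic matrix P and invariant probability μ: for every 1 ≤ j ≤ d, the expected cost of an excursion from j back to j satisfies C̄_{j,j} = (∑_{i=1}^d μ_i c̄_i)/μ_j, where C̄_{j,j} := c̄_j + ∑_{ℓ≠j} P_{j,ℓ} C_{ℓ,j}. -/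
open Matrix Finset

theorem sub_mulVec_aux (n : ℕ) (P : Matrix (Fin (n + 2)) (Fin (n + 2)) ℝ)
    (w : Fin (n + 2) → ℝ) (j : Fin (n + 2)) (hw : w j = 0) (k : Fin (n + 1)) :
    (((1 - P).submatrix j.succAbove j.succAbove) *ᵥ fun l => w (j.succAbove l)) k
      = w (j.succAbove k) - ∑ i, P (j.succAbove k) i * w i := by
  have h1 : ((1 - P) *ᵥ w) (j.succAbove k) = w (j.succAbove k) - ∑ i, P (j.succAbove k) i * w i := by
    rw [Matrix.sub_mulVec, Matrix.one_mulVec]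
    rfl
  rw [← h1]
  simp only [Matrix.mulVec, dotProduct]
  rw [Fin.sum_univ_succAbove _ j, hw]
  simp [Matrix.submatrix_apply]

theorem mu_sum_aux (n : ℕ) (P : Matrix (Fin (n + 2)) (Fin (n + 2)) ℝ)
    (μ : Fin (n + 2) → ℝ) (hμinv : ∀ j, ∑ i, μ i * P i j = μ j) (w : Fin (n + 2) → ℝ) :
    ∑ i, μ i * (∑ l, P i l * w l) = ∑ i, μ i * w i := by
  simp_rw [Finset.mul_sum]
  rw [Finset.sum_comm]
  refine Finset.sum_congr rfl fun l _ => ?_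
  rw [← hμinv l, Finset.sum_mul]
  exact Finset.sum_congr rfl fun i _ => by ring

theorem inj_aux (n : ℕ) (P : Matrix (Fin (n + 2)) (Fin (n + 2)) ℝ)
    (μ : Fin (n + 2) → ℝ)
    (hP0 : ∀ i j, 0 ≤ P i j)
    (hirr : ∀ i j, ∃ k : ℕ, 1 ≤ k ∧ 0 < (P ^ k) i j)
    (hμpos : ∀ i, 0 < μ i)
    (hμinv : ∀ j, ∑ i, μ i * P i j = μ j) (w : Fin (n + 2) → ℝ) (j : Fin (n + 2))
    (hw : w j = 0) (h : ∀ i, i ≠ j → w i = ∑ l, P i l * w l) (i : Fin (n + 2)) : w i = 0 := by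
  have hle : ∀ i, |w i| ≤ ∑ l, P i l * |w l| := by
    intro i
    by_cases hi : i = j
    · subst hi
      rw [hw, abs_zero]
      exact Finset.sum_nonneg fun l _ => mul_nonneg (hP0 _ _) (abs_nonneg _)
    · rw [h i hi]
      refine (Finset.abs_sum_le_sum_abs _ _).trans (le_of_eq ?_)
      exact Finset.sum_congr rfl fun l _ => by rw [abs_mul, abs_of_nonneg (hP0 _ _)]
  have hs := mu_sum_aux n P μ hμinv (fun l => |w l|)
  have heq : ∀ i, |w i| = ∑ l, P i l * |w l| := by
    have := (Finset.sum_eq_sum_iff_of_le (s := Finset.univ)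
      (fun i _ => mul_le_mul_of_nonneg_left (hle i) (hμpos i).le)).1 hs.symm
    intro i
    exact mul_left_cancel₀ (hμpos i).ne' (this i (Finset.mem_univ i))
  have hv : P *ᵥ (fun l => |w l|) = fun l => |w l| := by
    funext i
    exact (heq i).symm
  have hk : ∀ k : ℕ, (P ^ k) *ᵥ (fun l => |w l|) = fun l => |w l| := by
    intro k
    induction k with
    | zero => simp
    | succ k ih => rw [pow_succ, ← Matrix.mulVec_mulVec, hv, ih]
  have hp : ∀ k : ℕ, ∀ a b, 0 ≤ (P ^ k) a b := by
    intro k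
    induction k with
    | zero =>
      intro a b
      rw [pow_zero, Matrix.one_apply]
      split_ifs <;> norm_num
    | succ k ih =>
      intro a b
      rw [pow_succ, Matrix.mul_apply]
      exact Finset.sum_nonneg fun l _ => mul_nonneg (ih _ _) (hP0 _ _)
  obtain ⟨k, -, hpos⟩ := hirr j i
  have h0 : ∑ l, (P ^ k) j l * |w l| = 0 := by
    have := congrFun (hk k) j
    simp only [hw, abs_zero] at this
    exact this
  have := (Finset.sum_eq_zero_iff_of_nonneg
    (fun l _ => mul_nonneg (hp k j l) (abs_nonneg (w l)))).1 h0 i (Finset.mem_univ i)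
  rcases mul_eq_zero.1 this with h | h
  · exact absurd h hpos.ne'
  · exact abs_eq_zero.1 h

/-- Uncontrolled setting with an irreducible stochastic matrix `P`
(`d = n + 2`), invariant probability `μ`, cost vector `c̄` and cost matrix `C`.
For every `j`, the expected cost of an excursion from `j` back to `j` satisfies
`C̄_{j,j} = (∑ i, μ i * c̄ i) / μ j`, where `C̄_{j,j} := c̄ j + ∑_{ℓ ≠ j} P j ℓ * C ℓ j`. -/
theorem excursion_cost_eq_mean_cost_div_invariant
    (n : ℕ)
    (P : Matrix (Fin (n + 2)) (Fin (n + 2)) ℝ)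
    (c : Fin (n + 2) → ℝ) (μ : Fin (n + 2) → ℝ)
    (hP0 : ∀ i j, 0 ≤ P i j)
    (hP1 : ∀ i, ∑ j, P i j = 1)
    (hirr : ∀ i j, ∃ k : ℕ, 1 ≤ k ∧ 0 < (P ^ k) i j)
    (hμpos : ∀ i, 0 < μ i)
    (hμsum : ∑ i, μ i = 1)
    (hμinv : ∀ j, ∑ i, μ i * P i j = μ j)
    (C : Fin (n + 2) → Fin (n + 2) → ℝ)
    (hCdiag : ∀ j, C j j = 0)
    (hCoff : ∀ (j : Fin (n + 2)) (k : Fin (n + 1)),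
      C (j.succAbove k) j =
        (((1 - P).submatrix j.succAbove j.succAbove)⁻¹ *ᵥ fun l => c (j.succAbove l)) k) :
    ∀ j : Fin (n + 2),
      c j + ∑ ℓ ∈ Finset.univ.filter (fun ℓ => ℓ ≠ j), P j ℓ * C ℓ j =
        (∑ i, μ i * c i) / μ j := by
  intro j
  have hdet : IsUnit ((1 - P).submatrix j.succAbove j.succAbove) := by
    rw [← Matrix.mulVec_injective_iff_isUnit]
    refine (injective_iff_map_eq_zero
      (Matrix.mulVecLin ((1 - P).submatrix j.succAbove j.succAbove))).2 ?_
    intro v hv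
    have hins : v = fun l => (j.insertNth (0 : ℝ) v : Fin (n + 2) → ℝ) (j.succAbove l) := by
      funext l
      simp
    have hz := inj_aux n P μ hP0 hirr hμpos hμinv (j.insertNth (0 : ℝ) v) j (by simp) (by
      intro i hi
      obtain ⟨k, rfl⟩ := Fin.exists_succAbove_eq hi
      have h1 := sub_mulVec_aux n P (j.insertNth (0 : ℝ) v) j (by simp) k
      rw [← hins] at h1
      have h2 := congrFun hv k
      rw [Matrix.mulVecLin_apply, h1, Pi.zero_apply] at h2
      linarith)
    funext l
    have := hz (j.succAbove l)
    simpa using this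
  have hoff : ∀ i, i ≠ j → C i j - ∑ l, P i l * C l j = c i := by
    intro i hi
    obtain ⟨k, rfl⟩ := Fin.exists_succAbove_eq hi
    rw [← sub_mulVec_aux n P (fun i => C i j) j (hCdiag j) k]
    have : (fun l => C (j.succAbove l) j) =
        ((1 - P).submatrix j.succAbove j.succAbove)⁻¹ *ᵥ fun l => c (j.succAbove l) :=
      funext fun l => hCoff j l
    rw [this, Matrix.mulVec_mulVec, Matrix.mul_nonsing_inv _
      ((Matrix.isUnit_iff_isUnit_det _).1 hdet), Matrix.one_mulVec]
  have hs := mu_sum_aux n P μ hμinv (fun i => C i j)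
  have hfil : ∑ ℓ ∈ Finset.univ.filter (fun ℓ => ℓ ≠ j), P j ℓ * C ℓ j = ∑ l, P j l * C l j := by
    refine Finset.sum_subset (Finset.filter_subset _ _) ?_
    intro l _ hl
    have : l = j := by simpa using hl
    rw [this, hCdiag, mul_zero]
  rw [hfil, eq_div_iff (hμpos j).ne']
  have hd : ∑ i, μ i * (C i j - ∑ l, P i l * C l j) = 0 := by
    simp_rw [mul_sub]
    rw [Finset.sum_sub_distrib, hs, sub_self]
  rw [Fin.sum_univ_succAbove _ j] at hd
  have he : ∑ k, μ (j.succAbove k) * (C (j.succAbove k) j - ∑ l, P (j.succAbove k) l * C l j)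
      = ∑ k, μ (j.succAbove k) * c (j.succAbove k) :=
    Finset.sum_congr rfl fun k _ => by rw [hoff _ (Fin.succAbove_ne j k)]
  rw [he, hCdiag] at hd
  rw [Fin.sum_univ_succAbove (fun i => μ i * c i) j]
  linarith
end

section
/- In the uncontrolled setting with an irreducible stochastic matrix P and invariant probability μ, the following four conditions are equivalent: (i) the domain D has nonempty interior; (ii) there exist 1 ≤ i ≠ j ≤ d such that C_{i,j} + C_{j,i} > 0; (iii) ∑_{i=1}^d μ_i c̄_i > 0; (iv) for all 1 ≤ i ≠ j ≤ d, C_{i,j} + C_{j,i} > 0. -/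
open Matrix

theorem minPrinciple {d : ℕ} (P : Matrix (Fin d) (Fin d) ℝ)
    (hP0 : ∀ i j, 0 ≤ P i j) (hP1 : ∀ i, ∑ j, P i j = 1)
    (hirr : ∀ i j, ∃ k : ℕ, 1 ≤ k ∧ 0 < (P ^ k) i j)
    (j : Fin d) (x : Fin d → ℝ) (hx : ∀ i, i ≠ j → ∑ l, P i l * x l ≤ x i) (i : Fin d) :
    x j ≤ x i := by
  have : Nonempty (Fin d) := ⟨j⟩
  obtain ⟨m, hm⟩ := Finite.exists_min x
  have key : ∀ (k : ℕ) (i : Fin d), x i = x m → 0 < (P ^ k) i j → x j = x m := by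
    intro k
    induction k with
    | zero =>
      intro i hi h
      by_cases hij : i = j
      · rw [← hij, hi]
      · simp [Matrix.one_apply, hij] at h
    | succ k ih =>
      intro i hi h
      by_cases hij : i = j
      · rw [← hij, hi]
      rw [pow_succ', Matrix.mul_apply] at h
      obtain ⟨l, -, hl⟩ := Finset.exists_lt_of_sum_lt (s := Finset.univ)
        (f := fun _ => (0 : ℝ)) (by simpa using h)
      have h1 : 0 < P i l := by
        rcases (hP0 i l).lt_or_eq with h1 | h1
        · exact h1
        · simp [← h1] at hl
      have h2 : 0 < (P ^ k) l j := (mul_pos_iff_of_pos_left h1).1 hl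
      refine ih l ?_ h2
      have hs : ∑ l, P i l * (x l - x m) ≤ 0 := by
        have := hx i hij
        simp only [mul_sub, Finset.sum_sub_distrib, ← Finset.sum_mul, hP1]
        linarith
      have hn : ∀ l ∈ Finset.univ, 0 ≤ P i l * (x l - x m) := fun l _ =>
        mul_nonneg (hP0 i l) (sub_nonneg.2 (hm l))
      have h3 := (Finset.sum_eq_zero_iff_of_nonneg hn).1
        (le_antisymm hs (Finset.sum_nonneg hn)) l (Finset.mem_univ l)
      rcases mul_eq_zero.1 h3 with h3 | h3
      · linarith
      · linarith
  obtain ⟨k, -, hk⟩ := hirr m j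
  rw [key k m rfl hk]
  exact hm i

theorem submatrix_isUnit {n : ℕ} (P : Matrix (Fin (n+2)) (Fin (n+2)) ℝ)
    (hP0 : ∀ i j, 0 ≤ P i j) (hP1 : ∀ i, ∑ j, P i j = 1)
    (hirr : ∀ i j, ∃ k : ℕ, 1 ≤ k ∧ 0 < (P ^ k) i j) (j : Fin (n+2)) :
    IsUnit ((1 - P).submatrix j.succAbove j.succAbove) := by
  rw [← Matrix.mulVec_injective_iff_isUnit]
  have aux : ∀ v : Fin (n+1) → ℝ, ((1 - P).submatrix j.succAbove j.succAbove) *ᵥ v = 0 →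
      ∀ k, 0 ≤ v k := by
    intro v hv k
    have := minPrinciple P hP0 hP1 hirr j (j.insertNth (0:ℝ) v : Fin (n+2) → ℝ) (by
      intro i hi
      obtain ⟨k, rfl⟩ := Fin.exists_succAbove_eq hi
      have := congrFun hv k
      simp only [Matrix.mulVec, dotProduct, Matrix.submatrix_apply, Matrix.sub_apply,
        Matrix.one_apply, Fin.succAbove_right_inj, sub_mul, Finset.sum_sub_distrib] at this
      rw [Fin.sum_univ_succAbove _ j]
      simp at this ⊢
      linarith) (j.succAbove k)
    simpa using this
  intro v w hvw
  have h1 := aux (v - w) (by rw [Matrix.mulVec_sub]; exact sub_eq_zero.2 hvw)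
  have h2 := aux (w - v) (by rw [Matrix.mulVec_sub]; exact sub_eq_zero.2 hvw.symm)
  ext k
  have a := h1 k
  have b := h2 k
  simp at a b
  linarith

/-- Uncontrolled setting with an irreducible stochastic matrix `P`
(`d = n + 2`), invariant probability `μ`, cost vector `c̄`, cost matrix `C` and
domain `D`.  The following are equivalent:
(i) `D` has nonempty interior;
(ii) `∃ i ≠ j, C i j + C j i > 0`;
(iii) `∑ i, μ i * c̄ i > 0`;
(iv) `∀ i ≠ j, C i j + C j i > 0`. -/
theorem nonempty_interior_domain_tfae
    (n : ℕ)
    (P : Matrix (Fin (n + 2)) (Fin (n + 2)) ℝ)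
    (c : Fin (n + 2) → ℝ) (μ : Fin (n + 2) → ℝ)
    (hP0 : ∀ i j, 0 ≤ P i j)
    (hP1 : ∀ i, ∑ j, P i j = 1)
    (hirr : ∀ i j, ∃ k : ℕ, 1 ≤ k ∧ 0 < (P ^ k) i j)
    (hμpos : ∀ i, 0 < μ i)
    (hμsum : ∑ i, μ i = 1)
    (hμinv : ∀ j, ∑ i, μ i * P i j = μ j)
    (C : Fin (n + 2) → Fin (n + 2) → ℝ)
    (hCdiag : ∀ j, C j j = 0)
    (hCoff : ∀ (j : Fin (n + 2)) (k : Fin (n + 1)),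
      C (j.succAbove k) j =
        (((1 - P).submatrix j.succAbove j.succAbove)⁻¹ *ᵥ fun l => c (j.succAbove l)) k)
    (D : Set (Fin (n + 2) → ℝ))
    (hD : D = {x | ∀ i, (∑ j, P i j * x j) - c i ≤ x i}) :
    [(interior D).Nonempty,
      ∃ i j : Fin (n + 2), i ≠ j ∧ 0 < C i j + C j i,
      0 < ∑ i, μ i * c i,
      ∀ i j : Fin (n + 2), i ≠ j → 0 < C i j + C j i].TFAE := by
  classical
  have hμQ : ∀ x : Fin (n+2) → ℝ, ∑ i, μ i * (x i - ∑ l, P i l * x l) = 0 := by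
    intro x
    simp only [mul_sub, Finset.sum_sub_distrib, Finset.mul_sum]
    rw [Finset.sum_comm (f := fun i l => μ i * (P i l * x l))]
    simp only [← mul_assoc, ← Finset.sum_mul, hμinv, sub_self]
  have hC1 : ∀ j i, i ≠ j → C i j - ∑ l, P i l * C l j = c i := by
    intro j i hi
    obtain ⟨k, rfl⟩ := Fin.exists_succAbove_eq hi
    have hu := submatrix_isUnit P hP0 hP1 hirr j
    have hv : ((1 - P).submatrix j.succAbove j.succAbove) *ᵥ (fun k => C (j.succAbove k) j)
        = fun l => c (j.succAbove l) := by
      have : (fun k => C (j.succAbove k) j) =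
        (((1 - P).submatrix j.succAbove j.succAbove)⁻¹ *ᵥ fun l => c (j.succAbove l)) :=
        funext (hCoff j)
      rw [this, Matrix.mulVec_mulVec, Matrix.mul_nonsing_inv _ ((Matrix.isUnit_iff_isUnit_det _).1 hu),
        Matrix.one_mulVec]
    have := congrFun hv k
    simp only [Matrix.mulVec, dotProduct, Matrix.submatrix_apply, Matrix.sub_apply,
      Matrix.one_apply, Fin.succAbove_right_inj, sub_mul, Finset.sum_sub_distrib] at this
    rw [Fin.sum_univ_succAbove _ j, hCdiag]
    simp at this ⊢
    linarith
  obtain ⟨s, hs⟩ : ∃ s, s = ∑ i, μ i * c i := ⟨_, rfl⟩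
  have hC2 : ∀ j, C j j - ∑ l, P j l * C l j = c j - s / μ j := by
    intro j
    have h := hμQ (fun l => C l j)
    rw [Fin.sum_univ_succAbove _ j] at h hs
    have h' : ∀ k, C (j.succAbove k) j - ∑ l, P (j.succAbove k) l * C l j = c (j.succAbove k) :=
      fun k => hC1 j _ (Fin.succAbove_ne j k)
    simp only [h'] at h
    have hj := (hμpos j).ne'
    field_simp
    linarith
  have hC : ∀ j i, C i j - ∑ l, P i l * C l j = c i - if i = j then s / μ j else 0 := by
    intro j i
    by_cases h : i = j
    · subst h; simp [hC2]
    · simp [h, hC1 j i h]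
  have hu : ∀ i j k, (C k j - C k i) - ∑ l, P k l * (C l j - C l i) =
      (if k = i then s / μ i else 0) - if k = j then s / μ j else 0 := by
    intro i j k
    simp only [mul_sub, Finset.sum_sub_distrib]
    linarith [hC j k, hC i k]
  rw [← hs]
  tfae_have 3 → 4 := by
    intro hpos i j hij
    have hm := minPrinciple P hP0 hP1 hirr j (fun k => C k j - C k i) (by
      intro k hk
      have := hu i j k
      simp only [hk, if_false] at this
      have h2 : 0 ≤ (if k = i then s / μ i else 0) := by
        split_ifs
        · exact (div_pos hpos (hμpos i)).le
        · exact le_rfl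
      show ∑ l, P k l * (C l j - C l i) ≤ C k j - C k i
      linarith)
    have h1 := hm i
    simp only [hCdiag] at h1
    rcases (show 0 ≤ C i j + C j i by linarith).lt_or_eq with h | h
    · exact h
    exfalso
    have h3 := hu i j i
    simp only [hij, if_true, if_false, hCdiag] at h3
    have h4 : ∑ l, P i l * (C j j - C j i) ≤ ∑ l, P i l * (C l j - C l i) :=
      Finset.sum_le_sum fun l _ => mul_le_mul_of_nonneg_left (hm l) (hP0 i l)
    rw [← Finset.sum_mul, hP1, hCdiag] at h4
    have := div_pos hpos (hμpos i)
    linarith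
  tfae_have 4 → 2 := fun h => ⟨0, 1, by simp, h 0 1 (by simp)⟩
  tfae_have 2 → 3 := by
    rintro ⟨i, j, hij, h⟩
    by_contra hneg
    push Not at hneg
    have hm := minPrinciple P hP0 hP1 hirr j (fun k => C k i - C k j) (by
      intro k hk
      have := hu j i k
      simp only [hk, if_false] at this
      have h2 : (if k = i then s / μ i else 0) ≤ 0 := by
        split_ifs
        · exact div_nonpos_of_nonpos_of_nonneg hneg (hμpos i).le
        · exact le_rfl
      show ∑ l, P k l * (C l i - C l j) ≤ C k i - C k j
      linarith) i
    simp only [hCdiag] at hm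
    linarith
  tfae_have 3 → 1 := by
    intro hpos
    let U : Set (Fin (n+2) → ℝ) := {x | ∀ i, (∑ j, P i j * x j) - c i < x i}
    have hU : IsOpen U := by
      simp only [U, Set.setOf_forall]
      exact isOpen_iInter_of_finite fun i => isOpen_lt (by fun_prop) (by fun_prop)
    have hUD : U ⊆ D := by
      rw [hD]; exact fun x hx i => (hx i).le
    refine ⟨fun i => -∑ j, μ j * C i j, interior_maximal hUD hU ?_⟩
    intro i
    have e : ∑ l, P i l * (-∑ j, μ j * C l j) = -∑ j, μ j * ∑ l, P i l * C l j := by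
      simp only [mul_neg, Finset.sum_neg_distrib, Finset.mul_sum]
      rw [Finset.sum_comm]
      simp only [mul_left_comm]
    have e2 : ∑ j, μ j * (C i j - ∑ l, P i l * C l j) = c i - s := by
      simp only [hC, mul_sub, Finset.sum_sub_distrib, ← Finset.sum_mul, hμsum]
      simp [mul_div_cancel₀ _ (hμpos i).ne']
    simp only [mul_sub, Finset.sum_sub_distrib] at e2
    show ∑ l, P i l * (-∑ j, μ j * C l j) - c i < -∑ j, μ j * C i j
    rw [e]
    linarith
  tfae_have 1 → 3 := by
    rintro ⟨x, hx⟩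
    have hDs : ∀ y ∈ D, ∑ i, μ i * (y i - ∑ j, P i j * y j + c i) = s := by
      intro y _
      have := hμQ y
      simp only [mul_add, Finset.sum_add_distrib, this, hs, zero_add]
    have hDn : ∀ y ∈ D, ∀ i ∈ Finset.univ, 0 ≤ μ i * (y i - ∑ j, P i j * y j + c i) := by
      intro y hy i _
      rw [hD] at hy
      have := hy i
      exact mul_nonneg (hμpos i).le (by linarith)
    have hxD := interior_subset hx
    rcases (show 0 ≤ s by rw [← hDs x hxD]; exact Finset.sum_nonneg (hDn x hxD)).lt_or_eq with h | h
    · exact h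
    exfalso
    have hz : ∀ y ∈ D, ∀ i, y i - ∑ j, P i j * y j + c i = 0 := by
      intro y hy i
      have := (Finset.sum_eq_zero_iff_of_nonneg (hDn y hy)).1 ((hDs y hy).trans h.symm) i
        (Finset.mem_univ i)
      exact (mul_eq_zero.1 this).resolve_left (hμpos i).ne'
    have hcont : Filter.Tendsto (fun ε : ℝ => x + ε • (Pi.single 0 1 : Fin (n+2) → ℝ))
        (nhdsWithin 0 (Set.Ioi 0)) (nhds x) := by
      have : Continuous (fun ε : ℝ => x + ε • (Pi.single 0 1 : Fin (n+2) → ℝ)) := by fun_prop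
      have := this.tendsto 0
      simp only [zero_smul, add_zero] at this
      exact this.mono_left nhdsWithin_le_nhds
    obtain ⟨ε, hε, hεpos⟩ := ((hcont.eventually (mem_interior_iff_mem_nhds.1 hx)).and
      self_mem_nhdsWithin).exists
    have hεpos' : 0 < ε := hεpos
    have := minPrinciple P hP0 hP1 hirr 0 (fun k => ε * (Pi.single 0 1 : Fin (n+2) → ℝ) k) (by
      intro i _
      have h1 := hz x hxD i
      have h2 := hz _ hε i
      simp only [Pi.add_apply, Pi.smul_apply, smul_eq_mul, mul_add, Finset.sum_add_distrib] at h2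
      show ∑ l, P i l * (ε * (Pi.single 0 1 : Fin (n+2) → ℝ) l) ≤ ε * (Pi.single 0 1 : Fin (n+2) → ℝ) i
      linarith) 1
    simp at this
    linarith
  tfae_finish
end

section
/- In the uncontrolled setting with an irreducible stochastic matrix P, assume the domain D has nonempty interior. Define θ_{·,j} := C_{·,j} − C_{d,j}·(1,…,1) for all 1 ≤ j ≤ d. Then the d points (−θ_{·,j})_{1≤j≤d} are affinely independent, and the slice D_∘ = D ∩ {y ∈ ℝ^d : y_d = 0} is exactly the convex hull of the points (−θ_{·,j})_{1≤j≤d}. -/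
open Matrix

lemma aux_pow_mulVec {m : ℕ} (P : Matrix (Fin m) (Fin m) ℝ) (x : Fin m → ℝ)
    (h : P *ᵥ x = x) (k : ℕ) : (P ^ k) *ᵥ x = x := by
  induction k with
  | zero => simp
  | succ k ih => rw [pow_succ, ← Matrix.mulVec_mulVec, h, ih]

lemma aux_pow_vecMul {m : ℕ} (P : Matrix (Fin m) (Fin m) ℝ) (x : Fin m → ℝ)
    (h : x ᵥ* P = x) (k : ℕ) : x ᵥ* (P ^ k) = x := by
  induction k with
  | zero => simp
  | succ k ih => rw [pow_succ, ← Matrix.vecMul_vecMul, ih, h]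

lemma aux_pow_nonneg {m : ℕ} (P : Matrix (Fin m) (Fin m) ℝ)
    (hP0 : ∀ i j, 0 ≤ P i j) (k : ℕ) : ∀ i j, 0 ≤ (P ^ k) i j := by
  induction k with
  | zero => intro i j; rw [pow_zero, Matrix.one_apply]; split_ifs <;> norm_num
  | succ k ih =>
    intro i j
    rw [pow_succ, Matrix.mul_apply]
    exact Finset.sum_nonneg fun l _ => mul_nonneg (ih i l) (hP0 l j)

lemma aux_const {n : ℕ} (P : Matrix (Fin (n + 2)) (Fin (n + 2)) ℝ)
    (hP0 : ∀ i j, 0 ≤ P i j)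
    (hP1 : ∀ i, ∑ j, P i j = 1)
    (hirr : ∀ i j, ∃ k : ℕ, 1 ≤ k ∧ 0 < (P ^ k) i j)
    (x : Fin (n + 2) → ℝ) (h : P *ᵥ x = x) (a b : Fin (n + 2)) : x a = x b := by
  obtain ⟨i, hi⟩ := Finite.exists_max x
  have key : ∀ j, x j = x i := by
    intro j
    obtain ⟨k, _, hk⟩ := hirr i j
    have h1 : (P ^ k) *ᵥ (fun _ => (1 : ℝ)) = fun _ => 1 := by
      apply aux_pow_mulVec
      funext l
      simp [Matrix.mulVec, dotProduct, hP1]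
    have h2 := aux_pow_mulVec P x h k
    have h1i := congrFun h1 i
    have h2i := congrFun h2 i
    simp only [Matrix.mulVec, dotProduct, mul_one] at h1i h2i
    have h3 : ∑ l, (P ^ k) i l * (x i - x l) = 0 := by
      simp only [mul_sub, Finset.sum_sub_distrib, ← Finset.sum_mul]
      rw [h1i, h2i]; ring
    rw [Finset.sum_eq_zero_iff_of_nonneg] at h3
    · have := h3 j (Finset.mem_univ _)
      rcases mul_eq_zero.1 this with h | h <;> linarith
    · intro l _
      exact mul_nonneg (aux_pow_nonneg P hP0 k i l) (sub_nonneg.2 (hi l))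
  rw [key a, key b]

lemma aux_stat {n : ℕ} (P : Matrix (Fin (n + 2)) (Fin (n + 2)) ℝ)
    (hP0 : ∀ i j, 0 ≤ P i j)
    (hP1 : ∀ i, ∑ j, P i j = 1)
    (hirr : ∀ i j, ∃ k : ℕ, 1 ≤ k ∧ 0 < (P ^ k) i j) :
    ∃ π : Fin (n + 2) → ℝ, (∀ i, 0 < π i) ∧ π ᵥ* P = π := by
  have hone : (1 - P) *ᵥ (fun _ => (1 : ℝ)) = 0 := by
    rw [Matrix.sub_mulVec, Matrix.one_mulVec]
    funext l
    simp [Matrix.mulVec, dotProduct, hP1]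
  have hdet : (1 - P).det = 0 := by
    rw [← Matrix.exists_mulVec_eq_zero_iff]
    exact ⟨_, fun h => one_ne_zero (congrFun h 0), hone⟩
  obtain ⟨v, hv, hvP⟩ := Matrix.exists_vecMul_eq_zero_iff.2 hdet
  rw [Matrix.vecMul_sub, Matrix.vecMul_one, sub_eq_zero] at hvP
  have hle : ∀ j, |v j| ≤ ∑ i, |v i| * P i j := by
    intro j
    have h := congrFun hvP j
    simp only [Matrix.vecMul, dotProduct] at h
    rw [h]
    refine (Finset.abs_sum_le_sum_abs _ _).trans (le_of_eq ?_)
    refine Finset.sum_congr rfl fun i _ => ?_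
    rw [abs_mul, abs_of_nonneg (hP0 i j)]
  have hsum : ∑ j, ∑ i, |v i| * P i j = ∑ j, |v j| := by
    rw [Finset.sum_comm]
    simp only [← Finset.mul_sum, hP1, mul_one]
  have heq := (Finset.sum_eq_sum_iff_of_le (s := Finset.univ) (fun j _ => hle j)).1 hsum.symm
  have hst : (fun i => |v i|) ᵥ* P = fun i => |v i| := by
    funext j
    exact (heq j (Finset.mem_univ _)).symm
  refine ⟨fun i => |v i|, fun j => ?_, hst⟩
  obtain ⟨i, hi⟩ := Function.ne_iff.1 hv
  obtain ⟨k, _, hk⟩ := hirr i j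
  have h := congrFun (aux_pow_vecMul P _ hst k) j
  simp only [Matrix.vecMul, dotProduct] at h
  show 0 < |v j|
  rw [← h]
  refine lt_of_lt_of_le (mul_pos (abs_pos.2 hi) hk) ?_
  exact Finset.single_le_sum (f := fun i => |v i| * (P ^ k) i j)
    (fun l _ => mul_nonneg (abs_nonneg _) (aux_pow_nonneg P hP0 k l j)) (Finset.mem_univ i)

/-- Uncontrolled setting with an irreducible stochastic matrix `P`
(`d = n + 2`), cost vector `c̄`, cost matrix `C` and domain `D` with nonempty interior.
For `θ_{·,j} := C_{·,j} − C_{d,j}·(1,…,1)`, the `d` points `(−θ_{·,j})_j`, i.e.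
`(−θ)_{i,j} = C_{d,j} − C_{i,j}`, are affinely independent, and the slice
`D_∘ = D ∩ {y_d = 0}` is exactly their convex hull. -/
theorem slice_is_convex_hull_of_extreme_points
    (n : ℕ)
    (P : Matrix (Fin (n + 2)) (Fin (n + 2)) ℝ)
    (c : Fin (n + 2) → ℝ)
    (hP0 : ∀ i j, 0 ≤ P i j)
    (hP1 : ∀ i, ∑ j, P i j = 1)
    (hirr : ∀ i j, ∃ k : ℕ, 1 ≤ k ∧ 0 < (P ^ k) i j)
    (C : Fin (n + 2) → Fin (n + 2) → ℝ)
    (hCdiag : ∀ j, C j j = 0)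
    (hCoff : ∀ (j : Fin (n + 2)) (k : Fin (n + 1)),
      C (j.succAbove k) j =
        (((1 - P).submatrix j.succAbove j.succAbove)⁻¹ *ᵥ fun l => c (j.succAbove l)) k)
    (D : Set (Fin (n + 2) → ℝ))
    (hD : D = {x | ∀ i, (∑ j, P i j * x j) - c i ≤ x i})
    (hint : (interior D).Nonempty) :
    AffineIndependent ℝ
      (fun j : Fin (n + 2) => fun i : Fin (n + 2) =>
        C (Fin.last (n + 1)) j - C i j) ∧
    D ∩ {y | y (Fin.last (n + 1)) = 0} =
      convexHull ℝ (Set.range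
        (fun j : Fin (n + 2) => fun i : Fin (n + 2) =>
          C (Fin.last (n + 1)) j - C i j)) := by
  classical
  obtain ⟨π, hπ, hst⟩ := aux_stat P hP0 hP1 hirr
  have hconst := aux_const P hP0 hP1 hirr
  have hπQ : ∀ x : Fin (n + 2) → ℝ, ∑ i, π i * ((1 - P) *ᵥ x) i = 0 := by
    intro x
    change π ⬝ᵥ ((1 - P) *ᵥ x) = 0
    rw [Matrix.dotProduct_mulVec, Matrix.vecMul_sub, Matrix.vecMul_one, hst, sub_self,
      zero_dotProduct]
  have hker : ∀ x : Fin (n + 2) → ℝ, (1 - P) *ᵥ x = 0 → ∀ a b, x a = x b := by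
    intro x hx
    rw [Matrix.sub_mulVec, Matrix.one_mulVec, sub_eq_zero] at hx
    exact hconst x hx.symm
  have hQ1 : ∀ t : ℝ, (1 - P) *ᵥ (fun _ => t) = 0 := by
    intro t
    rw [Matrix.sub_mulVec, Matrix.one_mulVec]
    funext l
    simp [Matrix.mulVec, dotProduct, ← Finset.sum_mul, hP1]
  have hDmem : ∀ x, x ∈ D ↔ ∀ i, 0 ≤ ((1 - P) *ᵥ x) i + c i := by
    intro x
    rw [hD, Set.mem_ofPred_eq]
    refine forall_congr' fun i => ?_
    rw [Matrix.sub_mulVec, Matrix.one_mulVec, Pi.sub_apply]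
    simp only [Matrix.mulVec, dotProduct]
    constructor <;> intro h <;> linarith
  -- restriction to the complement of `j`
  have hsub : ∀ (j : Fin (n + 2)) (x : Fin (n + 2) → ℝ), x j = 0 → ∀ k,
      ((1 - P) *ᵥ x) (j.succAbove k) =
      ((1 - P).submatrix j.succAbove j.succAbove *ᵥ fun l => x (j.succAbove l)) k := by
    intro j x hx k
    simp only [Matrix.mulVec, dotProduct, Matrix.submatrix_apply]
    rw [Fin.sum_univ_succAbove _ j, hx, mul_zero, zero_add]
  have hunit : ∀ j : Fin (n + 2),
      IsUnit ((1 - P).submatrix j.succAbove j.succAbove).det := by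
    intro j
    rw [isUnit_iff_ne_zero]
    intro h0
    obtain ⟨v, hv, hv0⟩ := Matrix.exists_mulVec_eq_zero_iff.2 h0
    apply hv
    let x : Fin (n + 2) → ℝ := j.insertNth (α := fun _ => ℝ) 0 v
    have hxj : x j = 0 := by simp [x]
    have hxs : ∀ l, x (j.succAbove l) = v l := by intro l; simp [x]
    have h1 : ∀ k, ((1 - P) *ᵥ x) (j.succAbove k) = 0 := by
      intro k
      rw [hsub j x hxj k]
      simp only [hxs]
      exact congrFun hv0 k
    have h2 := hπQ x
    rw [Fin.sum_univ_succAbove _ j] at h2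
    simp only [h1, mul_zero, Finset.sum_const_zero, add_zero] at h2
    have h3 : ((1 - P) *ᵥ x) j = 0 := (mul_eq_zero.1 h2).resolve_left (hπ j).ne'
    have h4 : (1 - P) *ᵥ x = 0 := by
      funext i
      rcases Fin.eq_self_or_eq_succAbove j i with rfl | ⟨k, rfl⟩
      · exact h3
      · exact h1 k
    funext l
    rw [← hxs l, hker x h4 _ j, hxj]; rfl
  set p : Fin (n + 2) → Fin (n + 2) → ℝ := fun j => fun i : Fin (n + 2) =>
        C (Fin.last (n + 1)) j - C i j with hp
  have hpQ : ∀ j, (1 - P) *ᵥ p j = - ((1 - P) *ᵥ fun i => C i j) := by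
    intro j
    have : p j = (fun _ => C (Fin.last (n + 1)) j) - fun i => C i j := rfl
    rw [this, Matrix.mulVec_sub, hQ1, zero_sub]
  have hoff : ∀ j i, i ≠ j → ((1 - P) *ᵥ p j) i + c i = 0 := by
    intro j i hij
    obtain ⟨k, rfl⟩ := Fin.exists_succAbove_eq hij
    rw [hpQ, Pi.neg_apply, hsub j (fun i => C i j) (hCdiag j)]
    have : (fun l => C (j.succAbove l) j) =
        ((1 - P).submatrix j.succAbove j.succAbove)⁻¹ *ᵥ fun l => c (j.succAbove l) :=
      funext (hCoff j)
    rw [this, Matrix.mulVec_mulVec, Matrix.mul_nonsing_inv _ (hunit j), Matrix.one_mulVec]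
    ring
  obtain ⟨a, ha⟩ : ∃ a : Fin (n + 2) → ℝ, a = fun j => ((1 - P) *ᵥ p j) j + c j := ⟨_, rfl⟩
  have hval : ∀ j i, ((1 - P) *ᵥ p j) i + c i = if i = j then a j else 0 := by
    intro j i
    split_ifs with h
    · subst h; rw [ha]
    · exact hoff j i h
  obtain ⟨S, hS⟩ : ∃ S : ℝ, S = ∑ i, π i * c i := ⟨_, rfl⟩
  have hπc : ∀ x : Fin (n + 2) → ℝ, ∑ i, π i * (((1 - P) *ᵥ x) i + c i) = S := by
    intro x
    simp only [mul_add, Finset.sum_add_distrib]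
    rw [hπQ, zero_add, hS]
  have hSpos : 0 < S := by
    obtain ⟨x, hx⟩ := hint
    have hnn : ∀ y ∈ D, ∀ i ∈ Finset.univ, 0 ≤ π i * (((1 - P) *ᵥ y) i + c i) :=
      fun y hy i _ => mul_nonneg (hπ i).le ((hDmem y).1 hy i)
    have hS0 : 0 ≤ S := by
      rw [← hπc x]
      exact Finset.sum_nonneg (hnn x (interior_subset hx))
    rcases hS0.lt_or_eq with h | h
    · exact h
    exfalso
    have hz : ∀ y ∈ D, ∀ i, ((1 - P) *ᵥ y) i + c i = 0 := by
      intro y hy i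
      have h1 := (Finset.sum_eq_zero_iff_of_nonneg (hnn y hy)).1 ((hπc y).trans h.symm) i
        (Finset.mem_univ _)
      exact (mul_eq_zero.1 h1).resolve_left (hπ i).ne'
    let e : Fin (n + 2) → ℝ := Pi.single 0 1
    have hcont : Continuous fun t : ℝ => x + t • e := by fun_prop
    have hnh : ∀ᶠ t in nhds (0 : ℝ), x + t • e ∈ D := by
      apply hcont.continuousAt.eventually_mem
      simpa using mem_interior_iff_mem_nhds.1 hx
    obtain ⟨ε, hε, hball⟩ := Metric.eventually_nhds_iff.1 hnh
    have hmem : x + (ε / 2) • e ∈ D := by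
      apply hball
      rw [Real.dist_eq, sub_zero, abs_of_pos (by linarith)]
      linarith
    have hze : (1 - P) *ᵥ ((ε / 2) • e) = 0 := by
      funext i
      have h1 := hz _ hmem i
      have h2 := hz x (interior_subset hx) i
      rw [Matrix.mulVec_add, Pi.add_apply] at h1
      rw [Pi.zero_apply]
      linarith
    have := hker _ hze 0 1
    simp [e] at this
    linarith
  have haS : ∀ j, π j * a j = S := by
    intro j
    rw [← hπc (p j)]
    simp [hval]
  have hapos : ∀ j, 0 < a j := by
    intro j
    have := haS j
    by_contra hcon
    nlinarith [hπ j]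
  have hcomb : ∀ (s : Finset (Fin (n + 2))) (w : Fin (n + 2) → ℝ) (i : Fin (n + 2)),
      ((1 - P) *ᵥ (∑ j ∈ s, w j • p j)) i + (∑ j ∈ s, w j) * c i =
        if i ∈ s then w i * a i else 0 := by
    intro s w i
    rw [Matrix.mulVec_sum, Finset.sum_apply, Finset.sum_mul, ← Finset.sum_add_distrib]
    have : ∀ j ∈ s, ((1 - P) *ᵥ (w j • p j)) i + w j * c i =
        if i = j then w j * a j else 0 := by
      intro j _
      rw [Matrix.mulVec_smul, Pi.smul_apply, smul_eq_mul, ← mul_add, hval]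
      simp
    rw [Finset.sum_congr rfl this]
    simp
  have hplast : ∀ j, p j (Fin.last (n + 1)) = 0 := fun j => sub_self _
  constructor
  · rw [affineIndependent_iff]
    intro s w hw hwp i hi
    have := hcomb s w i
    rw [hw, hwp, if_pos hi, Matrix.mulVec_zero] at this
    simp only [Pi.zero_apply, zero_mul, add_zero] at this
    exact (mul_eq_zero.1 this.symm).resolve_right (hapos i).ne'
  · apply Set.Subset.antisymm
    · rintro y ⟨hyD, hy0⟩
      rw [hDmem] at hyD
      obtain ⟨w, hw⟩ : ∃ w : Fin (n + 2) → ℝ, w = fun j => (((1 - P) *ᵥ y) j + c j) / a j :=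
        ⟨_, rfl⟩
      have hwa : ∀ j, w j * a j = ((1 - P) *ᵥ y) j + c j := by
        intro j
        rw [hw]
        exact div_mul_cancel₀ _ (hapos j).ne'
      have hw0 : ∀ j, 0 ≤ w j := by
        intro j
        rw [hw]
        exact div_nonneg (hyD j) (hapos j).le
      have hw1 : ∑ j, w j = 1 := by
        have h1 := hπc y
        simp only [← hwa] at h1
        have h2 : ∀ i, π i * (w i * a i) = w i * S := by
          intro i; rw [← haS i]; ring
        simp only [h2, ← Finset.sum_mul] at h1
        exact mul_right_cancel₀ hSpos.ne' (h1.trans (one_mul S).symm)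
      have hz : (1 - P) *ᵥ ((∑ j, w j • p j) - y) = 0 := by
        funext i
        have h1 := hcomb Finset.univ w i
        rw [hw1, if_pos (Finset.mem_univ _), hwa] at h1
        rw [Matrix.mulVec_sub, Pi.sub_apply, Pi.zero_apply]
        linarith
      have hyeq : y = ∑ j, w j • p j := by
        funext i
        have h1 := hker _ hz i (Fin.last (n + 1))
        have h2 : (∑ j, w j • p j) (Fin.last (n + 1)) = 0 := by
          simp [Finset.sum_apply, hplast]
        have h3 : y (Fin.last (n + 1)) = 0 := hy0
        rw [Pi.sub_apply, Pi.sub_apply, h2, h3] at h1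
        linarith
      rw [hyeq]
      exact (convex_convexHull ℝ _).sum_mem (fun j _ => hw0 j) hw1
        (fun j _ => subset_convexHull ℝ _ ⟨j, rfl⟩)
    · apply convexHull_min
      · rintro _ ⟨j, rfl⟩
        refine ⟨(hDmem _).2 fun i => ?_, hplast j⟩
        rw [hval]
        split_ifs
        · exact (hapos j).le
        · exact le_rfl
      · intro x hx y hy s t hs ht hst
        refine ⟨(hDmem _).2 fun i => ?_, ?_⟩
        · have h1 := (hDmem x).1 hx.1 i
          have h2 := (hDmem y).1 hy.1 i
          rw [Matrix.mulVec_add, Matrix.mulVec_smul, Matrix.mulVec_smul]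
          simp only [Pi.add_apply, Pi.smul_apply, smul_eq_mul]
          have h3 : c i = s * c i + t * c i := by rw [← add_mul, hst, one_mul]
          rw [h3]
          nlinarith [mul_nonneg hs h1, mul_nonneg ht h2]
        · have h1 : x (Fin.last (n + 1)) = 0 := hx.2
          have h2 : y (Fin.last (n + 1)) = 0 := hy.2
          simp [h1, h2]
end

section
/- Let P be a d×d irreducible stochastic matrix with invariant probability μ and Q = I_d − P. For all pairwise distinct indices 1 ≤ i, j, k ≤ d, writing adj(M) for the adjugate matrix of M, one has: μ_i · adj(Q^{(j,j)})_{i^{(j)}, k^{(j)}} + μ_j · adj(Q^{(i,i)})_{j^{(i)}, k^{(i)}} = μ_k · adj(Q^{(i,i)})_{j^{(i)}, j^{(i)}}, and moreover adj(Q^{(j,j)})_{i^{(j)}, i^{(j)}} = adj(Q^{(i,i)})_{j^{(i)}, j^{(i)}}. -/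
open Matrix

lemma adj_aux {n : ℕ} (M : Matrix (Fin (n + 2)) (Fin (n + 2)) ℝ) (j : Fin (n + 2))
    (a b : Fin (n + 1)) :
    (M.submatrix j.succAbove j.succAbove).adjugate a b =
      ((M.updateRow (j.succAbove b) (Pi.single (j.succAbove a) 1)).updateRow j
        (Pi.single j 1)).det := by
  rw [← adjugate_apply (M.updateRow _ _), adjugate_fin_succ_eq_det_submatrix (M.updateRow _ _), adjugate_apply]
  have h : (-1 : ℝ) ^ ((j : ℕ) + (j : ℕ)) = 1 := Even.neg_one_pow ⟨_, rfl⟩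
  rw [h, one_mul]
  congr 1
  ext x y
  by_cases hx : x = b
  · subst hx
    simp [Pi.single_apply]
  · simp [updateRow_apply, hx]

lemma swap_aux {m : ℕ} (M : Matrix (Fin m) (Fin m) ℝ) (i k : Fin m) (hik : i ≠ k)
    (u v : Fin m → ℝ) :
    ((M.updateRow i u).updateRow k v).det = - ((M.updateRow i v).updateRow k u).det := by
  have h := det_permute (Equiv.swap i k) ((M.updateRow i v).updateRow k u)
  rw [Equiv.Perm.sign_swap hik] at h
  have e : ((M.updateRow i u).updateRow k v) =
      ((M.updateRow i v).updateRow k u).submatrix (Equiv.swap i k) id := by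
    ext x y
    by_cases h1 : x = i
    · subst h1
      simp [updateRow_apply, hik]
    · by_cases h2 : x = k
      · subst h2
        simp [updateRow_apply, hik]
      · simp [updateRow_apply, h1, h2, Equiv.swap_apply_of_ne_of_ne]
  rw [e, h]
  simp

lemma sum_aux {m : ℕ} (M : Matrix (Fin m) (Fin m) ℝ) (μ : Fin m → ℝ)
    (h0 : ∑ l, μ l • M l = 0) (i j k : Fin m) (hij : i ≠ j) (hik : i ≠ k) (hjk : j ≠ k)
    (N : Matrix (Fin m) (Fin m) ℝ) (hN : ∀ l, l ≠ i → l ≠ j → l ≠ k → N l = M l) :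
    μ i * (N.updateRow k (M i)).det + μ j * (N.updateRow k (M j)).det +
      μ k * (N.updateRow k (M k)).det = 0 := by
  let F : (Fin m → ℝ) →ₗ[ℝ] ℝ :=
    (detRowAlternating (n := Fin m) (R := ℝ)).toMultilinearMap.toLinearMap N k
  have hF : ∀ v, F v = (N.updateRow k v).det := fun v => rfl
  have h := congrArg F h0
  rw [map_sum, map_zero] at h
  have hs : ∑ l ∈ ({i, j, k} : Finset (Fin m)), F (μ l • M l) = ∑ l, F (μ l • M l) := by
    apply Finset.sum_subset (Finset.subset_univ _)
    intro l _ hl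
    simp only [Finset.mem_insert, Finset.mem_singleton, not_or] at hl
    rw [map_smul, hF, det_zero_of_row_eq hl.2.2, smul_zero]
    rw [updateRow_self, updateRow_ne hl.2.2, hN l hl.1 hl.2.1 hl.2.2]
  rw [h, Finset.sum_insert (by simp [hij, hik]), Finset.sum_insert (by simp [hjk]),
    Finset.sum_singleton] at hs
  simp only [hF, det_updateRow_smul] at hs
  linarith

/-- Let `P` be a `d × d` irreducible stochastic matrix (`d = n + 2`)
with invariant probability `μ` and `Q = I − P`.  For pairwise distinct indices
`i, j, k` (with `i = j.succAbove a`, `k = j.succAbove b`, `j = i.succAbove a'`,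
`k = i.succAbove b'`, so that `a = i^{(j)}`, `b = k^{(j)}`, `a' = j^{(i)}`,
`b' = k^{(i)}`), writing `adjugate` for the adjugate matrix:
`μ i * adj(Q^{(j,j)})_{i^{(j)},k^{(j)}} + μ j * adj(Q^{(i,i)})_{j^{(i)},k^{(i)}}
  = μ k * adj(Q^{(i,i)})_{j^{(i)},j^{(i)}}`, and moreover
`adj(Q^{(j,j)})_{i^{(j)},i^{(j)}} = adj(Q^{(i,i)})_{j^{(i)},j^{(i)}}`. -/
theorem adjugate_invariant_measure_identity
    (n : ℕ)
    (P : Matrix (Fin (n + 2)) (Fin (n + 2)) ℝ)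
    (μ : Fin (n + 2) → ℝ)
    (hP0 : ∀ i j, 0 ≤ P i j)
    (hP1 : ∀ i, ∑ j, P i j = 1)
    (hirr : ∀ i j, ∃ k : ℕ, 1 ≤ k ∧ 0 < (P ^ k) i j)
    (hμpos : ∀ i, 0 < μ i)
    (hμsum : ∑ i, μ i = 1)
    (hμinv : ∀ j, ∑ i, μ i * P i j = μ j)
    (i j k : Fin (n + 2))
    (hij : i ≠ j) (hik : i ≠ k) (hjk : j ≠ k)
    (a b a' b' : Fin (n + 1))
    (ha : j.succAbove a = i) (hb : j.succAbove b = k)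
    (ha' : i.succAbove a' = j) (hb' : i.succAbove b' = k) :
    μ i * ((1 - P).submatrix j.succAbove j.succAbove).adjugate a b +
      μ j * ((1 - P).submatrix i.succAbove i.succAbove).adjugate a' b' =
      μ k * ((1 - P).submatrix i.succAbove i.succAbove).adjugate a' a' ∧
    ((1 - P).submatrix j.succAbove j.succAbove).adjugate a a =
      ((1 - P).submatrix i.succAbove i.succAbove).adjugate a' a' := by
  have h0 : ∑ l, μ l • (1 - P) l = 0 := by
    ext c
    have := hμinv c
    simp only [Finset.sum_apply, Pi.smul_apply, Matrix.sub_apply, smul_eq_mul, mul_sub,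
      Finset.sum_sub_distrib, this, Pi.zero_apply]
    simp [Matrix.one_apply]
  simp only [adj_aux, ha, hb, ha', hb']
  generalize 1 - P = Q at h0 ⊢
  have hc : ((Q.updateRow i (Pi.single i 1)).updateRow j (Pi.single j 1)) =
      ((Q.updateRow j (Pi.single j 1)).updateRow i (Pi.single i 1)) :=
    updateRow_comm _ hij _ _
  refine ⟨?_, by rw [hc]⟩
  have h := sum_aux Q μ h0 i j k hij hik hjk
    ((Q.updateRow j (Pi.single j 1)).updateRow i (Pi.single i 1))
    (fun l h1 h2 _ => by rw [updateRow_ne h1, updateRow_ne h2])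
  have e3 : ((Q.updateRow j (Pi.single j 1)).updateRow i (Pi.single i 1)).updateRow k (Q k) =
      ((Q.updateRow j (Pi.single j 1)).updateRow i (Pi.single i 1)) := by
    ext x y
    by_cases hx : x = k
    · subst hx; simp [updateRow_apply, hik.symm, hjk.symm]
    · simp [updateRow_apply, hx]
  have e1 : ((Q.updateRow j (Pi.single j 1)).updateRow i (Q i)).updateRow k (Pi.single i 1) =
      (Q.updateRow k (Pi.single i 1)).updateRow j (Pi.single j 1) := by
    ext x y
    simp only [updateRow_apply]
    split_ifs <;> simp_all
  have e2 : ((Q.updateRow i (Pi.single i 1)).updateRow j (Q j)).updateRow k (Pi.single j 1) =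
      (Q.updateRow k (Pi.single j 1)).updateRow i (Pi.single i 1) := by
    ext x y
    simp only [updateRow_apply]
    split_ifs <;> simp_all
  rw [e3, swap_aux _ i k hik, e1, ← hc, swap_aux _ j k hjk, e2, hc] at h
  linarith
end

section
/- In the uncontrolled setting with an irreducible stochastic matrix P, assume: (a) the domain D has nonempty interior, and (b) the copositivity condition holds: for every 1 ≤ i ≤ d and every nonzero x ∈ ℝ^{d−1} with nonnegative entries, xᵀ Q^{(i,i)} x > 0. Then there exist a function H : ℝ^d → ℝ^{d×d} and constants η > 0, L ≥ 0 such that: (1) |H(y')| ≤ L for all y' ∈ ℝ^d; (2) H is continuous on D; (3) for every y' ∈ ℝ^d and every unit vector v in the outward normal cone C(𝔓(y')) of D at the Euclidean projection 𝔓(y') of y' onto D, one has vᵀ H(y') v ≥ η; (4) for every y ∈ D and every v ∈ C(y), the vector H(y)v belongs to the reflection cone C_o(y) := { −∑_{i=1}^d α_i e_i : α_i ≥ 0 and α_i = 0 whenever y_i > ∑_j P_{i,j} y_j − c̄_i }. -/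
open Matrix

namespace ORM

lemma copos_full (n : ℕ) (P : Matrix (Fin (n + 2)) (Fin (n + 2)) ℝ)
    (hcopos : ∀ (i : Fin (n + 2)) (x : Fin (n + 1) → ℝ),
      (∀ k, 0 ≤ x k) → x ≠ 0 →
        0 < x ⬝ᵥ (((1 - P).submatrix i.succAbove i.succAbove) *ᵥ x))
    (i : Fin (n + 2)) (x : Fin (n + 2) → ℝ) (hx : ∀ k, 0 ≤ x k) (hi : x i = 0) (hne : x ≠ 0) :
    0 < x ⬝ᵥ ((1 - P) *ᵥ x) := by
  have h := hcopos i (fun k => x (i.succAbove k)) (fun k => hx _) (by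
    intro h0
    apply hne
    funext j
    rcases Fin.eq_self_or_eq_succAbove i j with h | ⟨k, rfl⟩
    · rw [h, hi]; rfl
    · exact congrFun h0 k)
  convert h using 1
  simp only [dotProduct, mulVec, Fin.sum_univ_succAbove _ i, hi, Matrix.submatrix_apply]
  simp

lemma diag_lt (n : ℕ) (P : Matrix (Fin (n + 2)) (Fin (n + 2)) ℝ)
    (hc : ∀ (i : Fin (n + 2)) (x : Fin (n + 2) → ℝ), (∀ k, 0 ≤ x k) → x i = 0 → x ≠ 0 →
      0 < x ⬝ᵥ ((1 - P) *ᵥ x)) (i : Fin (n + 2)) : P i i < 1 := by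
  obtain ⟨j, hj⟩ := exists_ne i
  have h := hc j (Pi.single i 1) (fun k => by
    by_cases hk : k = i
    · subst hk; simp
    · simp [Pi.single_apply, hk]) (by simp [Pi.single_apply, hj]) (by
      intro h0; have := congrFun h0 i; simp at this)
  simp at h
  linarith

lemma det_unit (n : ℕ) (P : Matrix (Fin (n + 2)) (Fin (n + 2)) ℝ)
    (hP0 : ∀ i j, 0 ≤ P i j)
    (hP1 : ∀ i, ∑ j, P i j = 1)
    (hc : ∀ (i : Fin (n + 2)) (x : Fin (n + 2) → ℝ), (∀ k, 0 ≤ x k) → x i = 0 → x ≠ 0 →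
      0 < x ⬝ᵥ ((1 - P) *ᵥ x)) (i : Fin (n + 2)) :
    IsUnit ((1 - P).updateRow i (Pi.single i 1)) := by
  rw [← Matrix.vecMul_injective_iff_isUnit]
  rw [← Matrix.coe_vecMulLinear, injective_iff_map_eq_zero]
  intro a ha
  rw [Matrix.coe_vecMulLinear] at ha
  beta_reduce at ha
  have hB1 : ((1 - P).updateRow i (Pi.single i 1)) *ᵥ (fun _ => 1) = Pi.single i 1 := by
    funext k
    by_cases hk : k = i
    · subst hk
      simp [mulVec, dotProduct, Matrix.updateRow_self]
    · simp [mulVec, dotProduct, Matrix.updateRow_ne hk, hk, Matrix.sub_apply, Matrix.one_apply, hP1]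
  have hai : a i = 0 := by
    have h1 : a ⬝ᵥ (((1 - P).updateRow i (Pi.single i 1)) *ᵥ (fun _ => 1)) = 0 := by
      rw [Matrix.dotProduct_mulVec, ha]; simp
    rw [hB1] at h1
    simpa using h1
  have hcol : ∀ j, a j = ∑ l, a l * P l j := by
    intro j
    have h1 := congrFun ha j
    simp only [vecMul, dotProduct, Pi.zero_apply] at h1
    have h2 : ∑ l, a l * ((1 - P).updateRow i (Pi.single i 1)) l j = ∑ l, a l * (1 - P) l j := by
      refine Finset.sum_congr rfl fun l _ => ?_
      by_cases hl : l = i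
      · subst hl; simp [hai]
      · rw [Matrix.updateRow_ne hl]
    rw [h2] at h1
    simp only [Matrix.sub_apply, mul_sub, Finset.sum_sub_distrib, Matrix.one_apply] at h1
    simp at h1
    linarith
  by_contra hne
  have h := hc i (fun k => |a k|) (fun k => abs_nonneg _) (by simp [hai]) (by
    intro h0; apply hne; funext k; simpa using congrFun h0 k)
  rw [Matrix.dotProduct_mulVec] at h
  have : (fun k => |a k|) ᵥ* (1 - P) ⬝ᵥ (fun k => |a k|) ≤ 0 := by
    refine Finset.sum_nonpos fun j _ => ?_
    refine mul_nonpos_of_nonpos_of_nonneg ?_ (abs_nonneg _)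
    simp only [vecMul, dotProduct, Matrix.sub_apply, mul_sub, Finset.sum_sub_distrib,
      Matrix.one_apply]
    simp only [mul_ite, mul_one, mul_zero, Finset.sum_ite_eq', Finset.mem_univ, if_true]
    have h3 : |a j| ≤ ∑ l, |a l| * P l j := by
      rw [hcol j]
      refine (Finset.abs_sum_le_sum_abs _ _).trans (le_of_eq ?_)
      refine Finset.sum_congr rfl fun l _ => ?_
      rw [abs_mul, abs_of_nonneg (hP0 l j)]
    linarith
  linarith

/-- slack -/
def sl {n : ℕ} (P : Matrix (Fin (n + 2)) (Fin (n + 2)) ℝ) (c y : Fin (n + 2) → ℝ)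
    (i : Fin (n + 2)) : ℝ := y i - ((∑ j, P i j * y j) - c i)

lemma sl_add {n : ℕ} (P : Matrix (Fin (n + 2)) (Fin (n + 2)) ℝ) (c y w : Fin (n + 2) → ℝ) (t : ℝ)
    (i : Fin (n + 2)) : sl P c (y + t • w) i = sl P c y i + t * ((1 - P) *ᵥ w) i := by
  rw [sub_mulVec, one_mulVec, Pi.sub_apply]
  simp only [sl, Pi.add_apply, Pi.smul_apply, smul_eq_mul,
    mulVec, dotProduct, mul_add, Finset.sum_add_distrib, mul_sub, Finset.mul_sum]
  rw [Finset.sum_congr rfl (fun j _ => by ring : ∀ j ∈ Finset.univ,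
    P i j * (t * w j) = t * (P i j * w j))]
  ring

lemma exists_small {n : ℕ} (a b : Fin (n + 2) → ℝ) (h : ∀ i, 0 < a i ∨ (0 ≤ a i ∧ 0 ≤ b i)) :
    ∃ t : ℝ, 0 < t ∧ ∀ i, 0 ≤ a i + t * b i := by
  have : ∀ᶠ t : ℝ in nhdsWithin 0 (Set.Ioi 0), ∀ i, 0 ≤ a i + t * b i := by
    rw [Filter.eventually_all]
    intro i
    rcases h i with h | ⟨h1, h2⟩
    · have hc : Filter.Tendsto (fun t : ℝ => a i + t * b i) (nhdsWithin 0 (Set.Ioi 0))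
          (nhds (a i + 0 * b i)) :=
        (Continuous.tendsto (by fun_prop) 0).mono_left nhdsWithin_le_nhds
      have := hc.eventually (lt_mem_nhds (a := 0) (by simpa using h))
      exact this.mono fun t ht => ht.le
    · filter_upwards [self_mem_nhdsWithin] with t ht
      have : 0 < t := ht
      positivity
  obtain ⟨t, h1, h2⟩ := (this.and self_mem_nhdsWithin).exists
  exact ⟨t, h2, h1⟩

/-- normal vectors: signs of the image -/
lemma normal_sign {n : ℕ} (P : Matrix (Fin (n + 2)) (Fin (n + 2)) ℝ) (c : Fin (n + 2) → ℝ)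
    (i : Fin (n + 2)) (hu : IsUnit ((1 - P).updateRow i (Pi.single i 1)))
    (y : Fin (n + 2) → ℝ) (hy : ∀ k, 0 ≤ sl P c y k) (hi : 0 < sl P c y i)
    (v : Fin (n + 2) → ℝ)
    (hv : ∀ z : Fin (n + 2) → ℝ, (∀ k, 0 ≤ sl P c z k) → (∑ i, v i * (z i - y i)) ≤ 0)
    (k : Fin (n + 2)) :
    ((((1 - P).updateRow i (Pi.single i 1))⁻¹)ᵀ *ᵥ v) k ≤ 0 ∧
    (0 < sl P c y k → ((((1 - P).updateRow i (Pi.single i 1))⁻¹)ᵀ *ᵥ v) k = 0) := by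
  set B := (1 - P).updateRow i (Pi.single i 1) with hB
  set w : Fin (n + 2) → ℝ := B⁻¹ *ᵥ Pi.single k 1 with hw
  have hBw : B *ᵥ w = Pi.single k 1 := by
    rw [hw, mulVec_mulVec, Matrix.mul_nonsing_inv _ ((Matrix.isUnit_iff_isUnit_det _).1 hu),
      one_mulVec]
  have hQw : ∀ l, l ≠ i → ((1 - P) *ᵥ w) l = (Pi.single k 1 : Fin (n + 2) → ℝ) l := by
    intro l hl
    rw [← hBw, hB]
    simp only [mulVec, Matrix.updateRow_ne hl]
  have hval : ((B⁻¹)ᵀ *ᵥ v) k = ∑ j, v j * w j := by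
    rw [hw, mulVec_single_one]
    simp [mulVec, dotProduct, mul_comm]
  have hdir : ∀ u : Fin (n + 2) → ℝ, (∀ l, 0 < sl P c y l ∨ 0 ≤ ((1 - P) *ᵥ u) l) →
      ∑ j, v j * u j ≤ 0 := by
    intro u h
    obtain ⟨t, ht, h2⟩ := exists_small (sl P c y) ((1 - P) *ᵥ u)
      (fun l => (h l).imp id (fun h => ⟨hy l, h⟩))
    have h3 := hv (y + t • u) (fun l => by rw [sl_add]; exact h2 l)
    have h4 : ∑ j, v j * ((y + t • u) j - y j) = t * ∑ j, v j * u j := by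
      rw [Finset.mul_sum]
      refine Finset.sum_congr rfl fun j _ => ?_
      simp; ring
    rw [h4] at h3
    by_contra h5
    push Not at h5
    have := mul_pos ht h5
    linarith
  have h0 : ∀ l, 0 ≤ (Pi.single k 1 : Fin (n + 2) → ℝ) l := by
    intro l
    simp only [Pi.single_apply]; split_ifs <;> norm_num
  have hle : ∑ j, v j * w j ≤ 0 := by
    apply hdir
    intro l
    by_cases hl : l = i
    · subst hl; exact Or.inl hi
    · right; rw [hQw l hl]; exact h0 l
  rw [hval]
  refine ⟨hle, fun hk => le_antisymm hle ?_⟩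
  have := hdir (-w) (fun l => by
    by_cases hl : l = i
    · subst hl; exact Or.inl hi
    · by_cases hlk : l = k
      · subst hlk; exact Or.inl hk
      · right
        rw [mulVec_neg, Pi.neg_apply, hQw l hl]
        simp [Pi.single_apply, hlk])
  simp at this
  exact this

lemma eta_i {n : ℕ} (P : Matrix (Fin (n + 2)) (Fin (n + 2)) ℝ)
    (hc : ∀ (i : Fin (n + 2)) (x : Fin (n + 2) → ℝ), (∀ k, 0 ≤ x k) → x i = 0 → x ≠ 0 →
      0 < x ⬝ᵥ ((1 - P) *ᵥ x))
    (i : Fin (n + 2)) (hu : IsUnit ((1 - P).updateRow i (Pi.single i 1))) :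
    ∃ η : ℝ, 0 < η ∧ ∀ v : Fin (n + 2) → ℝ, (∑ j, v j ^ 2 = 1) →
      (∀ k, ((((1 - P).updateRow i (Pi.single i 1))⁻¹)ᵀ *ᵥ v) k ≤ 0) →
      ((((1 - P).updateRow i (Pi.single i 1))⁻¹)ᵀ *ᵥ v) i = 0 →
      η ≤ v ⬝ᵥ ((((1 - P).updateRow i (Pi.single i 1))⁻¹)ᵀ *ᵥ v) := by
  set B := (1 - P).updateRow i (Pi.single i 1) with hB
  set K : Set (Fin (n + 2) → ℝ) := {v | ∑ j, v j ^ 2 = 1 ∧ (∀ k, ((B⁻¹)ᵀ *ᵥ v) k ≤ 0) ∧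
    ((B⁻¹)ᵀ *ᵥ v) i = 0} with hK
  have hcont : ∀ k, Continuous (fun v : Fin (n + 2) → ℝ => ((B⁻¹)ᵀ *ᵥ v) k) := fun k =>
    (continuous_apply k).comp (Continuous.matrix_mulVec continuous_const continuous_id)
  have hKc : IsCompact K := by
    apply Metric.isCompact_of_isClosed_isBounded
    · have hKeq : K = {v | ∑ j, v j ^ 2 = 1} ∩ ((⋂ k, {v | ((B⁻¹)ᵀ *ᵥ v) k ≤ 0}) ∩
          {v | ((B⁻¹)ᵀ *ᵥ v) i = 0}) := by
        ext v
        simp [hK]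
      rw [hKeq]
      exact (isClosed_eq (by fun_prop) continuous_const).inter
        ((isClosed_iInter fun k => isClosed_le (hcont k) continuous_const).inter
          (isClosed_eq (hcont i) continuous_const))
    · apply (Metric.isBounded_closedBall (x := (0 : Fin (n + 2) → ℝ)) (r := 1)).subset
      intro v hv
      rw [mem_closedBall_zero_iff, pi_norm_le_iff_of_nonneg zero_le_one]
      intro j
      have := Finset.single_le_sum (f := fun j => v j ^ 2) (fun j _ => sq_nonneg _)
        (Finset.mem_univ j)
      rw [hv.1] at this
      rw [Real.norm_eq_abs]
      exact abs_le_one_iff_mul_self_le_one.2 (by nlinarith)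
  have hpos : ∀ v ∈ K, 0 < v ⬝ᵥ ((B⁻¹)ᵀ *ᵥ v) := by
    intro v hv
    obtain ⟨h1, h2, h3⟩ := hv
    set a := (B⁻¹)ᵀ *ᵥ v with ha
    have hva : v = a ᵥ* B := by
      rw [ha, mulVec_transpose, vecMul_vecMul,
        Matrix.nonsing_inv_mul _ ((Matrix.isUnit_iff_isUnit_det _).1 hu), vecMul_one]
    have hane : a ≠ 0 := by
      intro h0
      rw [h0, zero_vecMul] at hva
      rw [hva] at h1
      simp at h1
    have h4 := hc i (-a) (fun k => by simpa using h2 k) (by simpa using h3) (by simpa using hane)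
    have h5 : v = a ᵥ* (1 - P) := by
      rw [hva]
      funext j
      simp only [vecMul, dotProduct]
      refine Finset.sum_congr rfl fun l _ => ?_
      by_cases hl : l = i
      · subst hl; simp [h3]
      · rw [hB, Matrix.updateRow_ne hl]
    rw [h5, ← Matrix.dotProduct_mulVec]
    simpa [mulVec_neg] using h4
  rcases K.eq_empty_or_nonempty with he | hne
  · refine ⟨1, one_pos, fun v h1 h2 h3 => ?_⟩
    have : v ∈ K := ⟨h1, h2, h3⟩
    rw [he] at this
    exact this.elim
  · obtain ⟨v0, hv0, hmin⟩ := hKc.exists_isMinOn hne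
      (f := fun v => v ⬝ᵥ ((B⁻¹)ᵀ *ᵥ v))
      (Continuous.continuousOn (Continuous.dotProduct continuous_id
        (Continuous.matrix_mulVec continuous_const continuous_id)))
    exact ⟨_, hpos v0 hv0, fun v h1 h2 h3 => hmin (show v ∈ K from ⟨h1, h2, h3⟩)⟩

lemma exists_slack {n : ℕ} (P : Matrix (Fin (n + 2)) (Fin (n + 2)) ℝ) (c : Fin (n + 2) → ℝ)
    (hP0 : ∀ i j, 0 ≤ P i j)
    (hP1 : ∀ i, ∑ j, P i j = 1)
    (hd : ∀ i, P i i < 1)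
    (hint : (interior {x : Fin (n + 2) → ℝ | ∀ i, 0 ≤ sl P c x i}).Nonempty)
    (y : Fin (n + 2) → ℝ) : ∃ i, 0 < sl P c y i ∨ sl P c y i < 0 := by
  obtain ⟨x, hx⟩ := hint
  have hxs : ∀ i, 0 < sl P c x i := by
    intro i
    have hc : Filter.Tendsto (fun t : ℝ => x + t • (-(Pi.single i 1 : Fin (n + 2) → ℝ)))
        (nhdsWithin 0 (Set.Ioi 0)) (nhds (x + (0:ℝ) • (-(Pi.single i 1 : Fin (n + 2) → ℝ)))) :=
      (Continuous.tendsto (by fun_prop) 0).mono_left nhdsWithin_le_nhds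
    have h1 := hc.eventually (isOpen_interior.mem_nhds (by simpa using hx))
    obtain ⟨t, h2, ht⟩ := (h1.and self_mem_nhdsWithin).exists
    have h3 := interior_subset h2 i
    rw [sl_add] at h3
    simp [mulVec_neg] at h3
    have ht' : 0 < t := ht
    nlinarith [mul_pos ht' (sub_pos.2 (hd i))]
  by_contra hno
  push Not at hno
  have h0 : ∀ i, sl P c y i = 0 := fun i => le_antisymm (hno i).1 (hno i).2
  obtain ⟨i, hi⟩ := Finite.exists_min (fun i => x i - y i)
  have h1 := hxs i
  have h2 := h0 i
  have h3 : x i - y i ≤ ∑ j, P i j * (x j - y j) := by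
    calc x i - y i = ∑ j, P i j * (x i - y i) := by rw [← Finset.sum_mul, hP1, one_mul]
      _ ≤ _ := Finset.sum_le_sum fun j _ => mul_le_mul_of_nonneg_left (hi j) (hP0 i j)
  simp only [mul_sub, Finset.sum_sub_distrib] at h3
  unfold sl at h1 h2
  linarith

lemma proj_unique {n : ℕ} (P : Matrix (Fin (n + 2)) (Fin (n + 2)) ℝ) (c : Fin (n + 2) → ℝ)
    (y p q : Fin (n + 2) → ℝ) (hp : ∀ i, 0 ≤ sl P c p i) (hq : ∀ i, 0 ≤ sl P c q i)
    (hpm : ∀ w : Fin (n + 2) → ℝ, (∀ i, 0 ≤ sl P c w i) →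
      (∑ i, (y i - p i) ^ 2) ≤ ∑ i, (y i - w i) ^ 2)
    (hqm : ∀ w : Fin (n + 2) → ℝ, (∀ i, 0 ≤ sl P c w i) →
      (∑ i, (y i - q i) ^ 2) ≤ ∑ i, (y i - w i) ^ 2) : p = q := by
  have hm : ∀ i, 0 ≤ sl P c (p + (1/2 : ℝ) • (q - p)) i := by
    intro i
    have h1 := sl_add P c p (q - p) (1/2) i
    have h2 := sl_add P c p (q - p) 1 i
    rw [one_smul, add_sub_cancel] at h2
    have := hp i
    have := hq i
    linarith
  have h1 := hpm _ hm
  have h2 := hqm _ hm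
  have h3 : ∑ i, (p i - q i) ^ 2 = 2 * ∑ i, (y i - p i) ^ 2 + 2 * ∑ i, (y i - q i) ^ 2
      - 4 * ∑ i, (y i - (p + (1/2 : ℝ) • (q - p)) i) ^ 2 := by
    simp only [Finset.mul_sum, ← Finset.sum_add_distrib, ← Finset.sum_sub_distrib]
    refine Finset.sum_congr rfl fun i _ => ?_
    simp only [Pi.add_apply, Pi.smul_apply, Pi.sub_apply, smul_eq_mul]
    ring
  have h4 : ∑ i, (p i - q i) ^ 2 = 0 :=
    le_antisymm (by linarith) (Finset.sum_nonneg fun i _ => sq_nonneg _)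
  rw [Finset.sum_eq_zero_iff_of_nonneg (fun i _ => sq_nonneg _)] at h4
  funext i
  have := h4 i (Finset.mem_univ i)
  have := pow_eq_zero_iff (two_ne_zero) |>.1 this
  linarith

end ORM

/-- Uncontrolled setting with an irreducible stochastic matrix `P`
(`d = n + 2`), cost vector `c̄` and domain `D` with nonempty interior; assume the
copositivity condition: `xᵀ Q^{(i,i)} x > 0` for every `i` and every nonzero
nonnegative `x ∈ ℝ^{d−1}`.  Then there exist `H : ℝ^d → ℝ^{d×d}` and constants
`η > 0`, `L ≥ 0` such that:
(1) `|H(y')| ≤ L` (entrywise) for all `y'`;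
(2) `H` is continuous on `D`;
(3) for every `y'` and every unit vector `v` in the outward normal cone of `D` at the
Euclidean projection `p` of `y'` onto `D`, one has `vᵀ H(y') v ≥ η`;
(4) for every `y ∈ D` and every `v` in the normal cone at `y`, the vector `H(y) v`
belongs to the reflection cone
`C_o(y) = {−∑ αᵢ eᵢ : αᵢ ≥ 0, αᵢ = 0 whenever y_i > ∑_j P i j y j − c̄ i}`. -/
theorem existence_of_oblique_reflection_operator_markovian
    (n : ℕ)
    (P : Matrix (Fin (n + 2)) (Fin (n + 2)) ℝ)
    (c : Fin (n + 2) → ℝ)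
    (hP0 : ∀ i j, 0 ≤ P i j)
    (hP1 : ∀ i, ∑ j, P i j = 1)
    (hirr : ∀ i j, ∃ k : ℕ, 1 ≤ k ∧ 0 < (P ^ k) i j)
    (D : Set (Fin (n + 2) → ℝ))
    (hD : D = {x | ∀ i, (∑ j, P i j * x j) - c i ≤ x i})
    (hint : (interior D).Nonempty)
    (hcopos : ∀ (i : Fin (n + 2)) (x : Fin (n + 1) → ℝ),
      (∀ k, 0 ≤ x k) → x ≠ 0 →
        0 < x ⬝ᵥ (((1 - P).submatrix i.succAbove i.succAbove) *ᵥ x)) :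
    ∃ (H : (Fin (n + 2) → ℝ) → Matrix (Fin (n + 2)) (Fin (n + 2)) ℝ) (η L : ℝ),
      0 < η ∧ 0 ≤ L ∧
      (∀ y' i j, |H y' i j| ≤ L) ∧
      (∀ i j, ContinuousOn (fun y => H y i j) D) ∧
      (∀ y' p : Fin (n + 2) → ℝ, p ∈ D →
        (∀ w ∈ D, (∑ i, (y' i - p i) ^ 2) ≤ ∑ i, (y' i - w i) ^ 2) →
        ∀ v : Fin (n + 2) → ℝ, (∑ i, (v i) ^ 2) = 1 →
          (∀ z ∈ D, (∑ i, v i * (z i - p i)) ≤ 0) →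
          η ≤ v ⬝ᵥ (H y' *ᵥ v)) ∧
      (∀ y ∈ D, ∀ v : Fin (n + 2) → ℝ,
        (∀ z ∈ D, (∑ i, v i * (z i - y i)) ≤ 0) →
        ∃ α : Fin (n + 2) → ℝ, (∀ i, 0 ≤ α i) ∧
          (∀ i, (∑ j, P i j * y j) - c i < y i → α i = 0) ∧
          H y *ᵥ v = -α) := by
  classical
  have hDs : D = {x | ∀ i, 0 ≤ ORM.sl P c x i} := by
    rw [hD]; ext x
    simp only [Set.mem_setOf_eq, ORM.sl, sub_nonneg]
  clear hD
  subst hDs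
  have hc := ORM.copos_full n P hcopos
  have hd := ORM.diag_lt n P hc
  have hu := ORM.det_unit n P hP0 hP1 hc
  choose η hη hηv using fun i => ORM.eta_i P hc i (hu i)
  set G : Fin (n + 2) → Matrix (Fin (n + 2)) (Fin (n + 2)) ℝ :=
    fun i => (((1 - P).updateRow i (Pi.single i 1))⁻¹)ᵀ with hG
  obtain ⟨x0, hx0⟩ : {x | ∀ i, 0 ≤ ORM.sl P c x i}.Nonempty := hint.mono interior_subset
  set S : (Fin (n + 2) → ℝ) → ℝ := fun y => ∑ i, ORM.sl P c y i with hS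
  have hSpos : ∀ y, (∀ i, 0 ≤ ORM.sl P c y i) → 0 < S y := by
    intro y hy
    obtain ⟨i, hi⟩ := ORM.exists_slack P c hP0 hP1 hd hint y
    have hi' : 0 < ORM.sl P c y i := hi.resolve_right (not_lt.2 (hy i))
    exact Finset.sum_pos' (fun j _ => hy j) ⟨i, Finset.mem_univ i, hi'⟩
  set W : (Fin (n + 2) → ℝ) → Fin (n + 2) → ℝ := fun y i => ORM.sl P c y i / S y with hW
  have hW0 : ∀ y, (∀ i, 0 ≤ ORM.sl P c y i) → ∀ i, 0 ≤ W y i :=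
    fun y hy i => div_nonneg (hy i) (hSpos y hy).le
  have hW1 : ∀ y, (∀ i, 0 ≤ ORM.sl P c y i) → ∑ i, W y i = 1 := by
    intro y hy
    simp only [hW, ← Finset.sum_div]
    exact div_self (hSpos y hy).ne'
  have hWle : ∀ y, (∀ i, 0 ≤ ORM.sl P c y i) → ∀ i, W y i ≤ 1 := by
    intro y hy i
    rw [← hW1 y hy]
    exact Finset.single_le_sum (fun j _ => hW0 y hy j) (Finset.mem_univ i)
  -- pick the projection
  have hpi : ∀ y : Fin (n + 2) → ℝ, ∃ q : Fin (n + 2) → ℝ, (∀ i, 0 ≤ ORM.sl P c q i) ∧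
      ∀ p : Fin (n + 2) → ℝ, (∀ i, 0 ≤ ORM.sl P c p i) →
      (∀ w : Fin (n + 2) → ℝ, (∀ i, 0 ≤ ORM.sl P c w i) →
        (∑ i, (y i - p i) ^ 2) ≤ ∑ i, (y i - w i) ^ 2) → q = p := by
    intro y
    by_cases h : ∃ p : Fin (n + 2) → ℝ, (∀ i, 0 ≤ ORM.sl P c p i) ∧
      (∀ w : Fin (n + 2) → ℝ, (∀ i, 0 ≤ ORM.sl P c w i) →
        (∑ i, (y i - p i) ^ 2) ≤ ∑ i, (y i - w i) ^ 2)
    · obtain ⟨q, h1, h2⟩ := h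
      exact ⟨q, h1, fun p h3 h4 => ORM.proj_unique P c y q p h1 h3 h2 h4⟩
    · exact ⟨x0, hx0, fun p h3 h4 => (h ⟨p, h3, h4⟩).elim⟩
  choose π hπ hπu using hpi
  have hπD : ∀ y, (∀ i, 0 ≤ ORM.sl P c y i) → π y = y := by
    intro y hy
    refine hπu y y hy fun w _ => ?_
    simp only [sub_self]
    simpa using Finset.sum_nonneg fun i _ => sq_nonneg (y i - w i)
  set H0 : (Fin (n + 2) → ℝ) → Matrix (Fin (n + 2)) (Fin (n + 2)) ℝ :=
    fun y => ∑ i, W y i • G i with hH0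
  have hH0v : ∀ y v, H0 y *ᵥ v = ∑ i, W y i • (G i *ᵥ v) := by
    intro y v
    simp only [hH0, Matrix.sum_mulVec, Matrix.smul_mulVec]
  refine ⟨fun y => H0 (π y), Finset.univ.inf' Finset.univ_nonempty η,
    ∑ i, ∑ k, ∑ j, |G i k j|, ?_, ?_, ?_, ?_, ?_, ?_⟩
  · rw [Finset.lt_inf'_iff]
    exact fun i _ => hη i
  · positivity
  · intro y k j
    simp only [hH0, Matrix.sum_apply, Matrix.smul_apply, smul_eq_mul]
    refine (Finset.abs_sum_le_sum_abs _ _).trans (Finset.sum_le_sum fun i _ => ?_)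
    rw [abs_mul, abs_of_nonneg (hW0 _ (hπ y) i)]
    calc W (π y) i * |G i k j| ≤ 1 * |G i k j| :=
          mul_le_mul_of_nonneg_right (hWle _ (hπ y) i) (abs_nonneg _)
      _ = |G i k j| := one_mul _
      _ ≤ ∑ j, |G i k j| := Finset.single_le_sum (f := fun j => |G i k j|)
          (fun _ _ => abs_nonneg _) (Finset.mem_univ j)
      _ ≤ _ := Finset.single_le_sum (f := fun k => ∑ j, |G i k j|)
          (fun _ _ => Finset.sum_nonneg fun _ _ => abs_nonneg _) (Finset.mem_univ k)
  · intro k j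
    have hcs : ∀ i, Continuous fun y => ORM.sl P c y i := by
      intro i; unfold ORM.sl; fun_prop
    have h1 : ContinuousOn (fun y => H0 y k j) {x | ∀ i, 0 ≤ ORM.sl P c x i} := by
      simp only [hH0, Matrix.sum_apply, Matrix.smul_apply, smul_eq_mul]
      refine continuousOn_finsetSum _ fun i _ => ContinuousOn.mul ?_ continuousOn_const
      refine ContinuousOn.div (hcs i).continuousOn
        (continuous_finsetSum _ fun i _ => hcs i).continuousOn fun y hy => (hSpos y hy).ne'
    refine h1.congr fun y hy => ?_
    simp only [hπD y hy]
  · intro y p hp hmin v hv1 hv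
    have hyp : π y = p := hπu y p hp hmin
    simp only [hyp, hH0v]
    rw [dotProduct_sum]
    calc Finset.univ.inf' Finset.univ_nonempty η
        = ∑ i, W p i * Finset.univ.inf' Finset.univ_nonempty η := by
          rw [← Finset.sum_mul, hW1 p hp, one_mul]
      _ ≤ _ := Finset.sum_le_sum fun i _ => ?_
    rw [dotProduct_smul, smul_eq_mul]
    rcases (hp i).eq_or_lt with h | h
    · have : W p i = 0 := by simp only [hW, ← h, zero_div]
      simp [this]
    · refine mul_le_mul_of_nonneg_left ?_ (hW0 p hp i)
      refine (Finset.inf'_le η (Finset.mem_univ i)).trans ?_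
      have hs := ORM.normal_sign P c i (hu i) p hp h v hv
      exact hηv i v hv1 (fun k => (hs k).1) ((hs i).2 h)
  · intro y hy v hv
    refine ⟨-(H0 y *ᵥ v), ?_, ?_, ?_⟩
    · intro k
      simp only [hH0v, Pi.neg_apply, Finset.sum_apply, Pi.smul_apply, smul_eq_mul]
      rw [neg_nonneg]
      refine Finset.sum_nonpos fun i _ => ?_
      rcases (hy i).eq_or_lt with h | h
      · have : W y i = 0 := by simp only [hW, ← h, zero_div]
        simp [this]
      · exact mul_nonpos_of_nonneg_of_nonpos (hW0 y hy i)
          (ORM.normal_sign P c i (hu i) y hy h v hv k).1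
    · intro k hk
      have hk' : 0 < ORM.sl P c y k := by unfold ORM.sl; linarith
      simp only [hH0v, Pi.neg_apply, Finset.sum_apply, Pi.smul_apply, smul_eq_mul]
      rw [neg_eq_zero]
      refine Finset.sum_eq_zero fun i _ => ?_
      rcases (hy i).eq_or_lt with h | h
      · have : W y i = 0 := by simp only [hW, ← h, zero_div]
        simp [this]
      · rw [(ORM.normal_sign P c i (hu i) y hy h v hv k).2 hk', mul_zero]
    · simp only [hπD y hy, neg_neg]
end

section
/- Consider the 3-dimensional switching problem with controlled randomisation where 𝒞 = [0,1], P^u is the stochastic matrix with rows (0, u, 1−u), (1−u, 0, u), (u, 1−u, 0), and c̄^u_i = 1 − u(1−u) for i = 1,2,3. Let D := {y ∈ ℝ³ : y_i ≥ max_{u∈[0,1]}(∑_{j=1}^3 P^u_{i,j} y_j − (1 − u(1−u))) for i = 1,2,3}, which has nonempty interior. Then there exist a function H : ℝ³ → ℝ^{3×3} and constants η > 0, L ≥ 0 such that: (1) |H(y')| ≤ L for all y' ∈ ℝ³; (2) H is continuous on D; (3) for every y' ∈ ℝ³ and every unit vector v in the outward normal cone C(𝔓(y')) of D at the Euclidean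 projection 𝔓(y') of y' onto D, one has vᵀ H(y') v ≥ η; (4) for every y ∈ D and every v ∈ C(y), the vector H(y)v belongs to the reflection cone C_o(y) := { −∑_{i=1}^3 α_i e_i : α_i ≥ 0 and α_i = 0 whenever y_i > max_{u∈[0,1]}(∑_j P^u_{i,j} y_j − c̄^u_i) }. -/
open Matrix

/-- one constraint -/
def WCon (x y z : ℝ) : Prop :=
  ∀ u ∈ Set.Icc (0 : ℝ) 1, u * y + (1 - u) * z - (1 - u * (1 - u)) ≤ x

/-- strict constraint -/
def SCon (x y z : ℝ) : Prop :=
  ∀ u ∈ Set.Icc (0 : ℝ) 1, u * y + (1 - u) * z - (1 - u * (1 - u)) < x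

def Dom (x y z : ℝ) : Prop := WCon x y z ∧ WCon y z x ∧ WCon z x y

lemma Dom.rot {x y z : ℝ} (h : Dom x y z) : Dom y z x := ⟨h.2.1, h.2.2, h.1⟩

def Nor (x y z p q r : ℝ) : Prop :=
  ∀ x' y' z', Dom x' y' z' → p * (x' - x) + q * (y' - y) + r * (z' - z) ≤ 0

lemma Nor.rot {x y z p q r : ℝ} (h : Nor x y z p q r) : Nor y z x q r p := by
  intro y' z' x' hd
  have := h x' y' z' hd.rot.rot
  linarith

lemma lin_aux {u P Q : ℝ} (hu : u ∈ Set.Icc (0 : ℝ) 1)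
    (h : ∀ s ∈ Set.Icc (0 : ℝ) 1, (s - u) * (P - Q * (s + u)) ≤ 0) :
    (0 < u → 0 ≤ P - 2 * Q * u) ∧ (u < 1 → P - 2 * Q * u ≤ 0) := by
  obtain ⟨hu0, hu1⟩ := hu
  have hK : 0 < 1 + |Q| := by positivity
  have hQ1 := le_abs_self Q
  have hQ2 := neg_abs_le Q
  constructor
  · intro hu
    refine le_of_forall_pos_le_add fun ε hε => ?_
    set t := min u (ε / (1 + |Q|)) with ht
    have ht0 : 0 < t := lt_min hu (by positivity)
    have htu : t ≤ u := min_le_left _ _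
    have htε : t * (1 + |Q|) ≤ ε := by
      rw [← le_div_iff₀ hK]; exact min_le_right _ _
    have h1 := h (u - t) ⟨by linarith, by linarith⟩
    have h2 : 0 ≤ P - Q * (u - t + u) := by
      by_contra hc
      push Not at hc
      nlinarith
    nlinarith
  · intro hu
    refine le_of_forall_pos_le_add fun ε hε => ?_
    set t := min (1 - u) (ε / (1 + |Q|)) with ht
    have ht0 : 0 < t := lt_min (by linarith) (by positivity)
    have htu : t ≤ 1 - u := min_le_left _ _
    have htε : t * (1 + |Q|) ≤ ε := by
      rw [← le_div_iff₀ hK]; exact min_le_right _ _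
    have h1 := h (u + t) ⟨by linarith, by linarith⟩
    have h2 : P - Q * (u + t + u) ≤ 0 := by
      by_contra hc
      push Not at hc
      nlinarith
    nlinarith

lemma arc_pt {x y z u : ℝ} (hd : Dom x y z) (hu : u ∈ Set.Icc (0 : ℝ) 1)
    (ha : u * y + (1 - u) * z - (1 - u * (1 - u)) = x) :
    y = x + (2 * u - u ^ 2) ∧ z = x + (1 - u ^ 2) := by
  obtain ⟨h0, h1, h2⟩ := hd
  have key := lin_aux (P := y - z + 1) (Q := 1) hu (by
    intro s hs
    have := h0 s hs
    nlinarith)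
  obtain ⟨k1, k2⟩ := key
  have hz := h2 0 (by norm_num)
  have hy := h1 1 (by norm_num)
  obtain ⟨hu0, hu1⟩ := hu
  rcases hu0.eq_or_lt with rfl | hu0
  · have := k2 (by norm_num)
    constructor <;> linarith
  · rcases hu1.eq_or_lt with rfl | hu1
    · have := k1 (by norm_num)
      constructor <;> linarith
    · have := k1 hu0
      have := k2 hu1
      have e : y = z + 2 * u - 1 := by linarith
      subst e
      constructor <;> nlinarith

lemma arc_dom (t s : ℝ) (hs : s ∈ Set.Icc (0 : ℝ) 1) :
    Dom t (t + (2 * s - s ^ 2)) (t + (1 - s ^ 2)) := by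
  obtain ⟨hs0, hs1⟩ := hs
  refine ⟨?_, ?_, ?_⟩ <;> rintro u ⟨hu0, hu1⟩
  · nlinarith [sq_nonneg (u - s)]
  · nlinarith [mul_nonneg hs0 hu0, mul_nonneg hu0 (sub_nonneg.2 hu1), mul_nonneg hs0 (sub_nonneg.2 hs1), mul_nonneg (mul_nonneg hs0 hs0) hu0, sq_nonneg s, sq_nonneg u, sq_nonneg (1-u)]
  · nlinarith [mul_nonneg hs0 hu0, mul_nonneg hu0 (sub_nonneg.2 hu1), mul_nonneg hs0 (sub_nonneg.2 hs1), mul_nonneg (sub_nonneg.2 hs1) (sub_nonneg.2 hu1), sq_nonneg s, sq_nonneg u, sq_nonneg (1-u), sq_nonneg (1-s), mul_nonneg (sq_nonneg (1-s)) (sub_nonneg.2 hu1)]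

lemma Dom.add {x y z : ℝ} (hd : Dom x y z) (t : ℝ) : Dom (x + t) (y + t) (z + t) := by
  obtain ⟨h0, h1, h2⟩ := hd
  refine ⟨?_, ?_, ?_⟩ <;> intro u hu
  · have := h0 u hu; linarith
  · have := h1 u hu; linarith
  · have := h2 u hu; linarith

lemma Dom.zero (t : ℝ) : Dom t t t := by
  refine ⟨?_, ?_, ?_⟩ <;> rintro u ⟨hu0, hu1⟩ <;> nlinarith

lemma nor_sum {x y z p q r : ℝ} (hd : Dom x y z) (hn : Nor x y z p q r) : p + q + r = 0 := by
  have h1 := hn _ _ _ (hd.add 1)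
  have h2 := hn _ _ _ (hd.add (-1))
  apply le_antisymm <;> linarith

lemma nor_arc {x p q r u : ℝ} (hu : u ∈ Set.Icc (0 : ℝ) 1)
    (hn : Nor x (x + (2 * u - u ^ 2)) (x + (1 - u ^ 2)) p q r) :
    (0 < u → 0 ≤ q * (1 - u) - r * u) ∧ (u < 1 → q * (1 - u) - r * u ≤ 0) ∧
    0 ≤ q * (2 * u - u ^ 2) + r * (1 - u ^ 2) := by
  have key := lin_aux (P := 2 * q) (Q := q + r) hu (by
    intro s hs
    have := hn _ _ _ (arc_dom x s hs)
    nlinarith)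
  refine ⟨fun h => ?_, fun h => ?_, ?_⟩
  · have := key.1 h; linarith
  · have := key.2 h; linarith
  · have := hn _ _ _ (Dom.zero x); linarith

lemma nor_cases {x y z p q r u : ℝ} (hd : Dom x y z) (hn : Nor x y z p q r)
    (hu : u ∈ Set.Icc (0 : ℝ) 1)
    (ha : u * y + (1 - u) * z - (1 - u * (1 - u)) = x) :
    (u = 0 ∧ y = x ∧ z = x + 1 ∧ p ≤ 0 ∧ q ≤ 0 ∧ r = - p - q) ∨
    (u = 1 ∧ y = x + 1 ∧ z = x ∧ p ≤ 0 ∧ r ≤ 0 ∧ q = - p - r) ∨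
    (0 < u ∧ u < 1 ∧ y = x + (2 * u - u ^ 2) ∧ z = x + (1 - u ^ 2) ∧ p ≤ 0 ∧
      q = - p * u ∧ r = - p * (1 - u)) := by
  have hs := nor_sum hd hn
  obtain ⟨hy, hz⟩ := arc_pt hd hu ha
  have hn' := hn
  rw [hy, hz] at hn'
  obtain ⟨k1, k2, k3⟩ := nor_arc hu hn'
  obtain ⟨hu0, hu1⟩ := hu
  rcases hu0.eq_or_lt with rfl | hu0
  · left
    have hm := hn.rot
    obtain ⟨m1, m2, m3⟩ := nor_arc (x := y) (p := q) (q := r) (r := p) (u := 1) (by norm_num) (by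
      convert hm using 1 <;> linarith)
    have := m1 (by norm_num)
    have := k2 (by norm_num)
    refine ⟨rfl, ?_, ?_, ?_, ?_, ?_⟩ <;> linarith
  · rcases hu1.eq_or_lt with rfl | hu1
    · right; left
      have hm := hn.rot.rot
      obtain ⟨m1, m2, m3⟩ := nor_arc (x := z) (p := r) (q := p) (r := q) (u := 0) (by norm_num) (by
        convert hm using 1 <;> linarith)
      have := m2 (by norm_num)
      have := k1 (by norm_num)
      refine ⟨rfl, ?_, ?_, ?_, ?_, ?_⟩ <;> linarith
    · right; right
      have e1 := k1 hu0
      have e2 := k2 hu1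
      have hp : p = - q - r := by linarith
      have hq : q = - p * u := by rw [hp]; linarith
      have hr : r = - p * (1 - u) := by rw [hp]; linarith
      refine ⟨hu0, hu1, hy, hz, ?_, hq, hr⟩
      by_contra hc
      push Not at hc
      have h3 : 0 < u * (2 * u - u ^ 2) + (1 - u) * (1 - u ^ 2) := by
        have : 0 < u * (2 * u - u ^ 2) := by
          apply mul_pos hu0; nlinarith
        have : 0 ≤ (1 - u) * (1 - u ^ 2) := by
          apply mul_nonneg <;> nlinarith
        linarith
      have h4 := mul_pos hc h3
      rw [hq, hr] at k3
      linarith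

noncomputable def dg (x y z : ℝ) : ℝ := 1 - max 0 (max (x - z) (x - y))
noncomputable def og (x y z : ℝ) : ℝ := - max 0 ((y + z - 2 * x - 1) / 2)

noncomputable def Hv (x y z p q r : ℝ) : ℝ := dg x y z * p + og z x y * q + og y z x * r

def TT (x y z p q r : ℝ) : Prop :=
  (Hv x y z p q r ≤ 0 ∧ (SCon x y z → Hv x y z p q r = 0)) ∧
  (Hv y z x q r p ≤ 0 ∧ (SCon y z x → Hv y z x q r p = 0)) ∧
  (Hv z x y r p q ≤ 0 ∧ (SCon z x y → Hv z x y r p q = 0)) ∧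
  (p ^ 2 + q ^ 2 + r ^ 2) / 3 ≤
    p * Hv x y z p q r + q * Hv y z x q r p + r * Hv z x y r p q

lemma TT.rot {x y z p q r : ℝ} (h : TT x y z p q r) : TT y z x q r p := by
  obtain ⟨h1, h2, h3, h4⟩ := h
  exact ⟨h2, h3, h1, by linarith⟩

lemma TT_of_vals {x y z p q r : ℝ} (A B C : ℝ) (hA : Hv x y z p q r = A)
    (hB : Hv y z x q r p = B) (hC : Hv z x y r p q = C)
    (h1 : A ≤ 0 ∧ (SCon x y z → A = 0)) (h2 : B ≤ 0 ∧ (SCon y z x → B = 0))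
    (h3 : C ≤ 0 ∧ (SCon z x y → C = 0))
    (h4 : (p ^ 2 + q ^ 2 + r ^ 2) / 3 ≤ p * A + q * B + r * C) : TT x y z p q r := by
  subst hA hB hC
  exact ⟨h1, h2, h3, h4⟩

lemma dg_eq {x y z w : ℝ} (m : ℝ) (h : w = 1 - m) (h0 : 0 ≤ m) (h1 : x - z ≤ m) (h2 : x - y ≤ m)
    (h3 : m = 0 ∨ m = x - z ∨ m = x - y) : dg x y z = w := by
  unfold dg
  rw [h]
  congr 1
  apply le_antisymm
  · exact max_le h0 (max_le h1 h2)
  · rcases h3 with h | h | h <;> rw [h] <;> simp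

lemma og_zero {x y z : ℝ} (h : y + z - 2 * x - 1 ≤ 0) : og x y z = 0 := by
  unfold og
  rw [max_eq_left (by linarith)]; simp

lemma og_eq {x y z w : ℝ} (h : w = - ((y + z - 2 * x - 1) / 2)) (h0 : 0 ≤ y + z - 2 * x - 1) :
    og x y z = w := by
  unfold og
  rw [max_eq_right (by linarith), h]

lemma TT_act {x y z p q r u : ℝ} (hd : Dom x y z) (hn : Nor x y z p q r)
    (hu : u ∈ Set.Icc (0 : ℝ) 1)
    (ha : u * y + (1 - u) * z - (1 - u * (1 - u)) = x) : TT x y z p q r := by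
  have hx : ¬ SCon x y z := fun h => (h u hu).ne ha
  have hc := nor_cases hd hn hu ha
  have hH : 0 ≤ u ∧ u ≤ 1 ∧ y = x + (2 * u - u ^ 2) ∧ z = x + (1 - u ^ 2) := by
    obtain ⟨hy, hz⟩ := arc_pt hd hu ha
    exact ⟨hu.1, hu.2, hy, hz⟩
  obtain ⟨hu0, hu1, hy, hz⟩ := hH
  have d0 : dg x y z = 1 := dg_eq 0 (by ring) le_rfl (by nlinarith) (by nlinarith) (Or.inl rfl)
  have d1 : dg y z x = (1 - u) ^ 2 := dg_eq (2 * u - u ^ 2) (by ring) (by nlinarith) (by nlinarith)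
    (by nlinarith) (Or.inr (Or.inl (by linarith)))
  have d2 : dg z x y = u ^ 2 := dg_eq (1 - u ^ 2) (by ring) (by nlinarith) (by nlinarith)
    (by nlinarith) (Or.inr (Or.inr (by linarith)))
  have o0 : og x y z = - (u * (1 - u)) := og_eq (by rw [hy, hz]; ring) (by nlinarith)
  have o1 : og y z x = 0 := og_zero (by nlinarith)
  have o2 : og z x y = 0 := og_zero (by nlinarith)
  have e0 : Hv x y z p q r = p := by unfold Hv; rw [d0, o1, o2]; ring
  have e1 : Hv y z x q r p = (1 - u) * ((1 - u) * q - u * r) := by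
    unfold Hv; rw [d1, o0, o2]; ring
  have e2 : Hv z x y r p q = - u * ((1 - u) * q - u * r) := by
    unfold Hv; rw [d2, o1, o0]; ring
  rcases hc with ⟨rfl, hy, hz, hp, hq, hr⟩ | ⟨rfl, hy, hz, hp, hr, hq⟩ | ⟨h0, h1, hy, hz, hp, hq, hr⟩
  · have h1 : ¬ SCon y z x := fun h => by
      have := h 1 (by norm_num)
      linarith
    refine TT_of_vals p q 0 e0 (by rw [e1]; ring) (by rw [e2]; ring) ⟨hp, fun h => absurd h hx⟩
      ⟨hq, fun h => absurd h h1⟩ ⟨le_rfl, fun _ => rfl⟩ ?_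
    subst hr
    nlinarith [sq_nonneg (p - q)]
  · have h1 : ¬ SCon z x y := fun h => by
      have := h 0 (by norm_num)
      linarith
    refine TT_of_vals p 0 r e0 (by rw [e1]; ring) (by rw [e2]; ring) ⟨hp, fun h => absurd h hx⟩
      ⟨le_rfl, fun _ => rfl⟩ ⟨hr, fun h => absurd h h1⟩ ?_
    subst hq
    nlinarith [sq_nonneg (p - r)]
  · refine TT_of_vals p 0 0 e0 (by rw [e1, hq, hr]; ring) (by rw [e2, hq, hr]; ring)
      ⟨hp, fun h => absurd h hx⟩ ⟨le_rfl, fun _ => rfl⟩ ⟨le_rfl, fun _ => rfl⟩ ?_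
    subst hq hr
    nlinarith [mul_nonneg (sq_nonneg p) (mul_nonneg hu0 (sub_nonneg.2 hu1)), sq_nonneg p]

lemma SCon.margin {x y z : ℝ} (h : SCon x y z) : ∃ δ > 0, ∀ u ∈ Set.Icc (0 : ℝ) 1,
    u * y + (1 - u) * z - (1 - u * (1 - u)) + δ ≤ x := by
  obtain ⟨m, hm, hmax⟩ := (isCompact_Icc (a := (0 : ℝ)) (b := 1)).exists_isMaxOn (by simp)
    (f := fun u : ℝ => u * y + (1 - u) * z - (1 - u * (1 - u))) (by fun_prop)
  refine ⟨x - (m * y + (1 - m) * z - (1 - m * (1 - m))), by linarith [h m hm], fun u hu => ?_⟩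
  have := isMaxOn_iff.1 hmax u hu
  linarith

lemma con_small {x y z p q r δ t : ℝ} (h : ∀ u ∈ Set.Icc (0 : ℝ) 1,
    u * y + (1 - u) * z - (1 - u * (1 - u)) + δ ≤ x) (ht : 0 < t)
    (hδ : t * (|p| + |q| + |r|) ≤ δ) : WCon (x + t * p) (y + t * q) (z + t * r) := by
  intro u hu
  have h1 := h u hu
  obtain ⟨hu0, hu1⟩ := hu
  have h2 : u * q + (1 - u) * r - p ≤ |p| + |q| + |r| := by
    have := neg_abs_le p
    have := mul_le_mul_of_nonneg_left (le_abs_self q) hu0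
    have := mul_le_mul_of_nonneg_left (le_abs_self r) (sub_nonneg.2 hu1)
    have := mul_le_mul_of_nonneg_right hu1 (abs_nonneg q)
    have := mul_nonneg hu0 (abs_nonneg r)
    linarith
  have h3 := mul_le_mul_of_nonneg_left h2 ht.le
  linarith

lemma nor_int {x y z p q r : ℝ} (h0 : SCon x y z) (h1 : SCon y z x) (h2 : SCon z x y)
    (hn : Nor x y z p q r) : p = 0 ∧ q = 0 ∧ r = 0 := by
  obtain ⟨d0, hd0, k0⟩ := h0.margin
  obtain ⟨d1, hd1, k1⟩ := h1.margin
  obtain ⟨d2, hd2, k2⟩ := h2.margin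
  set δ := min d0 (min d1 d2)
  have hδ : 0 < δ := lt_min hd0 (lt_min hd1 hd2)
  have l0 : δ ≤ d0 := min_le_left _ _
  have l1 : δ ≤ d1 := (min_le_right _ _).trans (min_le_left _ _)
  have l2 : δ ≤ d2 := (min_le_right _ _).trans (min_le_right _ _)
  have hK : 0 < 1 + (|p| + |q| + |r|) := by positivity
  obtain ⟨t, ht, htd⟩ : ∃ t > 0, t * (1 + (|p| + |q| + |r|)) = δ :=
    ⟨δ / (1 + (|p| + |q| + |r|)), by positivity, by field_simp⟩
  have := hn (x + t * p) (y + t * q) (z + t * r)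
    ⟨con_small (p := p) (q := q) (r := r) k0 ht (by linarith), con_small (p := q) (q := r) (r := p) k1 ht (by linarith), con_small (p := r) (q := p) (r := q) k2 ht (by linarith)⟩
  have hs : t * (p ^ 2 + q ^ 2 + r ^ 2) ≤ 0 := by linarith
  have hs' : p ^ 2 + q ^ 2 + r ^ 2 ≤ 0 := by
    by_contra hc
    push Not at hc
    have := mul_pos ht hc
    linarith
  refine ⟨?_, ?_, ?_⟩ <;> nlinarith [sq_nonneg p, sq_nonneg q, sq_nonneg r]

lemma not_scon {x y z : ℝ} (hc : WCon x y z) (h : ¬ SCon x y z) : ∃ u ∈ Set.Icc (0 : ℝ) 1,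
    u * y + (1 - u) * z - (1 - u * (1 - u)) = x := by
  unfold SCon at h
  push Not at h
  obtain ⟨u, hu, h⟩ := h
  exact ⟨u, hu, le_antisymm (hc u hu) h⟩

lemma TT_main {x y z p q r : ℝ} (hd : Dom x y z) (hn : Nor x y z p q r) : TT x y z p q r := by
  by_cases h0 : SCon x y z
  · by_cases h1 : SCon y z x
    · by_cases h2 : SCon z x y
      · obtain ⟨rfl, rfl, rfl⟩ := nor_int h0 h1 h2 hn
        exact TT_of_vals 0 0 0 (by simp [Hv]) (by simp [Hv]) (by simp [Hv]) (by simp) (by simp)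
          (by simp) (by simp)
      · obtain ⟨u, hu, ha⟩ := not_scon hd.2.2 h2
        exact (TT_act hd.rot.rot hn.rot.rot hu ha).rot
    · obtain ⟨u, hu, ha⟩ := not_scon hd.2.1 h1
      exact (TT_act hd.rot hn.rot hu ha).rot.rot
  · obtain ⟨u, hu, ha⟩ := not_scon hd.1 h0
    exact TT_act hd hn hu ha

lemma con_bd {x y z : ℝ} (h : WCon x y z) : y ≤ x + 1 ∧ z ≤ x + 1 := by
  have h0 := h 0 (by norm_num)
  have h1 := h 1 (by norm_num)
  constructor <;> linarith

lemma dg_bd {x y z : ℝ} (h : Dom x y z) : |dg x y z| ≤ 1 := by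
  have h1 := con_bd h.2.1
  have h2 := con_bd h.2.2
  have : max 0 (max (x - z) (x - y)) ≤ 1 :=
    max_le (by norm_num) (max_le (by linarith) (by linarith))
  have : 0 ≤ max 0 (max (x - z) (x - y)) := le_max_left _ _
  unfold dg
  rw [abs_le]; constructor <;> linarith

lemma og_bd {x y z : ℝ} (h : Dom x y z) : |og x y z| ≤ 1 := by
  have h1 := con_bd h.1
  have : max 0 ((y + z - 2 * x - 1) / 2) ≤ 1 :=
    max_le (by norm_num) (by linarith)
  have : 0 ≤ max 0 ((y + z - 2 * x - 1) / 2) := le_max_left _ _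
  unfold og
  rw [abs_le]; constructor <;> linarith

noncomputable def Ht (y : Fin 3 → ℝ) : Matrix (Fin 3) (Fin 3) ℝ :=
  !![dg (y 0) (y 1) (y 2), og (y 2) (y 0) (y 1), og (y 1) (y 2) (y 0);
     og (y 2) (y 0) (y 1), dg (y 1) (y 2) (y 0), og (y 0) (y 1) (y 2);
     og (y 1) (y 2) (y 0), og (y 0) (y 1) (y 2), dg (y 2) (y 0) (y 1)]

lemma Ht_cont (i j : Fin 3) : Continuous (fun y => Ht y i j) := by
  fin_cases i <;> fin_cases j <;> simp [Ht, dg, og] <;> fun_prop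

lemma Ht_bd (y : Fin 3 → ℝ) (h : Dom (y 0) (y 1) (y 2)) (i j : Fin 3) : |Ht y i j| ≤ 1 := by
  have a0 := dg_bd h
  have a1 := dg_bd h.rot
  have a2 := dg_bd h.rot.rot
  have b0 := og_bd h
  have b1 := og_bd h.rot
  have b2 := og_bd h.rot.rot
  fin_cases i <;> fin_cases j <;> simpa [Ht]

lemma Ht_mul (y v : Fin 3 → ℝ) : Ht y *ᵥ v =
    ![Hv (y 0) (y 1) (y 2) (v 0) (v 1) (v 2), Hv (y 1) (y 2) (y 0) (v 1) (v 2) (v 0),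
      Hv (y 2) (y 0) (y 1) (v 2) (v 0) (v 1)] := by
  ext i
  fin_cases i <;> simp [Ht, Hv, Matrix.mulVec, dotProduct, Fin.sum_univ_three] <;> ring

/-- The 3-dimensional switching problem with controlled
randomisation, with `𝒞 = [0,1]`, transition matrices
`P^u = !![0, u, 1−u; 1−u, 0, u; u, 1−u, 0]` and costs `c̄^u_i = 1 − u(1−u)`.
The domain `D` has nonempty interior, and there exist `H : ℝ³ → ℝ^{3×3}` and
constants `η > 0`, `L ≥ 0` such that:
(1) `|H(y')| ≤ L` (entrywise); (2) `H` is continuous on `D`;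
(3) `vᵀ H(y') v ≥ η` for every unit vector `v` in the outward normal cone of `D`
at the Euclidean projection of `y'` onto `D`;
(4) for every `y ∈ D` and `v` in the normal cone at `y`, `H(y) v` lies in the
reflection cone `C_o(y)`. -/
theorem existence_of_oblique_reflection_operator_controlled_example
    (Pu : ℝ → Matrix (Fin 3) (Fin 3) ℝ)
    (hPu : ∀ u : ℝ, Pu u = !![0, u, 1 - u; 1 - u, 0, u; u, 1 - u, 0])
    (D : Set (Fin 3 → ℝ))
    (hD : D = {y | ∀ i : Fin 3, ∀ u ∈ Set.Icc (0 : ℝ) 1,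
      (∑ j, Pu u i j * y j) - (1 - u * (1 - u)) ≤ y i}) :
    (interior D).Nonempty ∧
    ∃ (H : (Fin 3 → ℝ) → Matrix (Fin 3) (Fin 3) ℝ) (η L : ℝ),
      0 < η ∧ 0 ≤ L ∧
      (∀ y' i j, |H y' i j| ≤ L) ∧
      (∀ i j, ContinuousOn (fun y => H y i j) D) ∧
      (∀ y' p : Fin 3 → ℝ, p ∈ D →
        (∀ w ∈ D, (∑ i, (y' i - p i) ^ 2) ≤ ∑ i, (y' i - w i) ^ 2) →
        ∀ v : Fin 3 → ℝ, (∑ i, (v i) ^ 2) = 1 →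
          (∀ z ∈ D, (∑ i, v i * (z i - p i)) ≤ 0) →
          η ≤ v ⬝ᵥ (H y' *ᵥ v)) ∧
      (∀ y ∈ D, ∀ v : Fin 3 → ℝ,
        (∀ z ∈ D, (∑ i, v i * (z i - y i)) ≤ 0) →
        ∃ α : Fin 3 → ℝ, (∀ i, 0 ≤ α i) ∧
          (∀ i : Fin 3, (∀ u ∈ Set.Icc (0 : ℝ) 1,
            (∑ j, Pu u i j * y j) - (1 - u * (1 - u)) < y i) → α i = 0) ∧
          H y *ᵥ v = -α) := by
  have hcon0 : ∀ (y : Fin 3 → ℝ) (u : ℝ), (∑ j, Pu u 0 j * y j) = u * y 1 + (1 - u) * y 2 := by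
    intro y u; simp [hPu, Fin.sum_univ_three]
  have hcon1 : ∀ (y : Fin 3 → ℝ) (u : ℝ), (∑ j, Pu u 1 j * y j) = u * y 2 + (1 - u) * y 0 := by
    intro y u; simp [hPu, Fin.sum_univ_three]; ring
  have hcon2 : ∀ (y : Fin 3 → ℝ) (u : ℝ), (∑ j, Pu u 2 j * y j) = u * y 0 + (1 - u) * y 1 := by
    intro y u; simp [hPu, Fin.sum_univ_three]
  have hmem : ∀ y, y ∈ D ↔ Dom (y 0) (y 1) (y 2) := by
    intro y
    rw [hD, Set.mem_ofPred_eq, Fin.forall_fin_succ, Fin.forall_fin_two]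
    simp only [Fin.succ_zero_eq_one, Fin.succ_one_eq_two, hcon0, hcon1, hcon2]
    rfl
  have hnor : ∀ y v : Fin 3 → ℝ, (∀ z ∈ D, (∑ i, v i * (z i - y i)) ≤ 0) →
      Nor (y 0) (y 1) (y 2) (v 0) (v 1) (v 2) := by
    intro y v h a b c hd
    have := h ![a, b, c] ((hmem _).2 (by simpa using hd))
    simpa [Fin.sum_univ_three] using this
  refine ⟨⟨0, ?_⟩, ?_⟩
  · rw [mem_interior_iff_mem_nhds]
    refine Filter.mem_of_superset (Metric.ball_mem_nhds 0 (by norm_num : (0 : ℝ) < 1 / 8)) ?_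
    intro y hy
    rw [mem_ball_zero_iff] at hy
    have hb : ∀ i, -(1 / 8) ≤ y i ∧ y i ≤ 1 / 8 := fun i =>
      abs_le.1 (((norm_le_pi_norm y i).trans hy.le))
    have h0 := hb 0
    have h1 := hb 1
    have h2 := hb 2
    rw [hmem]
    refine ⟨?_, ?_, ?_⟩ <;> rintro u ⟨hu0, hu1⟩ <;> nlinarith [sq_nonneg (u - 1 / 2)]
  classical
  refine ⟨fun y => if y ∈ D then Ht y else 1, 1 / 3, 1, by norm_num, by norm_num, ?_, ?_, ?_, ?_⟩
  · intro y i j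
    by_cases hy : y ∈ D
    · simp only [hy, if_true]
      exact Ht_bd y ((hmem y).1 hy) i j
    · simp only [hy, if_false, Matrix.one_apply]
      split_ifs <;> simp
  · intro i j
    refine (Ht_cont i j).continuousOn.congr fun y hy => ?_
    simp only [hy, if_true]
  · intro y p hp hproj v hv hn
    by_cases hy : y ∈ D
    · have h0 := hproj y hy
      simp only [Fin.sum_univ_three, sub_self] at h0
      have e : p = y := by
        ext i
        fin_cases i <;> simp <;>
          nlinarith [sq_nonneg (y 0 - p 0), sq_nonneg (y 1 - p 1), sq_nonneg (y 2 - p 2)]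
      subst e
      obtain ⟨_, _, _, h4⟩ := TT_main ((hmem p).1 hy) (hnor p v hn)
      simp only [hy, if_true, Ht_mul]
      rw [Fin.sum_univ_three] at hv
      rw [hv] at h4
      simpa [dotProduct, Fin.sum_univ_three] using h4
    · simp only [hy, if_false, Matrix.one_mulVec]
      have : v ⬝ᵥ v = 1 := by
        rw [← hv]; simp [dotProduct, pow_two]
      rw [this]; norm_num
  · intro y hy v hn
    obtain ⟨h0, h1, h2, _⟩ := TT_main ((hmem y).1 hy) (hnor y v hn)
    simp only [hy, if_true]
    refine ⟨-(Ht y *ᵥ v), ?_, ?_, by simp⟩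
    · rw [Fin.forall_fin_succ, Fin.forall_fin_two, Ht_mul]
      simpa using ⟨h0.1, h1.1, h2.1⟩
    · rw [Fin.forall_fin_succ, Fin.forall_fin_two, Ht_mul]
      simp only [Fin.succ_zero_eq_one, Fin.succ_one_eq_two, hcon0, hcon1, hcon2]
      refine ⟨fun h => ?_, fun h => ?_, fun h => ?_⟩
      · simpa using h0.2 h
      · simpa using h1.2 h
      · simpa using h2.2 h
end
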